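/- arXiv:1702.05503 — 2 statements merged into one kernel-verified Lean document; each statement's English description precedes it below -/
import Mathlib

section
/- Assume d ≤ 1 (and 0 < d < n−1). Then for every u ∈ W there exists a sequence (u_k) of functions in C_c^∞(ℝⁿ) such that u_k → u in L¹_loc(ℝⁿ) and ‖u_k − u‖_W → 0. In particular, compactly supported smooth functions are dense in W for the seminorm ‖·‖_W, with no normalization at infinity. -/
open MeasureTheory Metric Set Filter
open scoped ENNReal NNReal Topology

noncomputable section

/-- Euclidean space `ℝⁿ`. -/
abbrev Euc (n : ℕ) := EuclideanSpace ℝ (Fin n)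

/-- `Γ ⊆ ℝⁿ` is `d`-Ahlfors regular with constant `C₀`. -/
def AhlforsRegular (n : ℕ) (d C₀ : ℝ) (Γ : Set (Euc n)) : Prop :=
  ∀ x ∈ Γ, ∀ r : ℝ, 0 < r →
    ENNReal.ofReal (C₀⁻¹ * r ^ d) ≤ μH[d] (Γ ∩ ball x r) ∧
      μH[d] (Γ ∩ ball x r) ≤ ENNReal.ofReal (C₀ * r ^ d)

/-- The weight `w(x) = dist(x, Γ) ^ (d + 1 - n)`. -/
def weightW (n : ℕ) (d : ℝ) (Γ : Set (Euc n)) (x : Euc n) : ℝ :=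
  infDist x Γ ^ (d + 1 - (n : ℝ))

/-- The measure `m` with density `w` with respect to Lebesgue measure. -/
def measW (n : ℕ) (d : ℝ) (Γ : Set (Euc n)) : Measure (Euc n) :=
  volume.withDensity fun x => ENNReal.ofReal (weightW n d Γ x)

/-- `v` is a distributional gradient of `u` on the open set `E`: for every smooth
compactly supported test function `φ` with support in `E`, `∫_E u ∇φ = -∫_E φ v`. -/
def IsDistribGradOn {n : ℕ} (u : Euc n → ℝ) (v : Euc n → Euc n) (E : Set (Euc n)) : Prop :=
  ∀ φ : Euc n → ℝ, ContDiff ℝ (⊤ : ℕ∞) φ → HasCompactSupport φ → tsupport φ ⊆ E →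
    ∫ x in E, u x • gradient φ x = -∫ x in E, φ x • v x

/-- The averages of `u` over small balls centered at `x` converge to `t`. -/
def HasTraceAt {n : ℕ} (u : Euc n → ℝ) (x : Euc n) (t : ℝ) : Prop :=
  Tendsto (fun ρ : ℝ => ⨍ y in ball x ρ, u y) (𝓝[>] (0 : ℝ)) (𝓝 t)

/-- `u` belongs to the weighted Sobolev space `W = Ẇ^{1,2}_w(Ω)`, `Ω = Γᶜ`, with
distributional gradient `v` on `Ω` lying in `L²(Ω, m)`. -/
structure MemW (n : ℕ) (d : ℝ) (Γ : Set (Euc n)) (u : Euc n → ℝ) (v : Euc n → Euc n) :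
    Prop where
  locInt : LocallyIntegrableOn u Γᶜ volume
  gradLocInt : LocallyIntegrableOn v Γᶜ volume
  isGrad : IsDistribGradOn u v Γᶜ
  l2 : ∫⁻ x in Γᶜ, ENNReal.ofReal (‖v x‖ ^ 2) ∂(measW n d Γ) < ⊤

/-- `u` belongs to the local space `W_r(E)`: `u ∈ L¹_loc(E)` and `φ u` (extended by `0`)
belongs to `W` for every smooth compactly supported `φ` with support in `E`. -/
def MemWrOn (n : ℕ) (d : ℝ) (Γ : Set (Euc n)) (E : Set (Euc n)) (u : Euc n → ℝ) : Prop :=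
  LocallyIntegrableOn u E volume ∧
    ∀ φ : Euc n → ℝ, ContDiff ℝ (⊤ : ℕ∞) φ → HasCompactSupport φ → tsupport φ ⊆ E →
      ∃ vφ : Euc n → Euc n, MemW n d Γ (fun x => φ x * u x) vφ

/-- Degenerate ellipticity and boundedness conditions for the matrix `A`. -/
def EllipticOn (n : ℕ) (d : ℝ) (Γ : Set (Euc n)) (A : Euc n → Euc n →L[ℝ] Euc n)
    (C₁ : ℝ) : Prop :=
  ∀ x, x ∉ Γ →
    (∀ ξ ζ : Euc n, |∑ i, A x ξ i * ζ i| ≤ C₁ * weightW n d Γ x * ‖ξ‖ * ‖ζ‖) ∧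
      ∀ ξ : Euc n, C₁⁻¹ * weightW n d Γ x * ‖ξ‖ ^ 2 ≤ ∑ i, A x ξ i * ξ i

/-- `u`, with gradient `v`, is a weak subsolution of `- div A ∇u = 0` on `U ⊆ Ω = Γᶜ`. -/
def SubsolOn {n : ℕ} (Γ : Set (Euc n)) (A : Euc n → Euc n →L[ℝ] Euc n)
    (v : Euc n → Euc n) (U : Set (Euc n)) : Prop :=
  ∀ φ : Euc n → ℝ, ContDiff ℝ (⊤ : ℕ∞) φ → HasCompactSupport φ → tsupport φ ⊆ U →
    (∀ x, 0 ≤ φ x) → ∫ x in Γᶜ, ∑ i, A x (v x) i * gradient φ x i ≤ 0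

/-- `u`, with gradient `v`, is a weak supersolution of `- div A ∇u = 0` on `U ⊆ Ω = Γᶜ`. -/
def SupersolOn {n : ℕ} (Γ : Set (Euc n)) (A : Euc n → Euc n →L[ℝ] Euc n)
    (v : Euc n → Euc n) (U : Set (Euc n)) : Prop :=
  ∀ φ : Euc n → ℝ, ContDiff ℝ (⊤ : ℕ∞) φ → HasCompactSupport φ → tsupport φ ⊆ U →
    (∀ x, 0 ≤ φ x) → 0 ≤ ∫ x in Γᶜ, ∑ i, A x (v x) i * gradient φ x i

/-- `u`, with gradient `v`, is a weak solution of `- div A ∇u = 0` on `U ⊆ Ω = Γᶜ`. -/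
def SolOn {n : ℕ} (Γ : Set (Euc n)) (A : Euc n → Euc n →L[ℝ] Euc n)
    (v : Euc n → Euc n) (U : Set (Euc n)) : Prop :=
  ∀ φ : Euc n → ℝ, ContDiff ℝ (⊤ : ℕ∞) φ → HasCompactSupport φ → tsupport φ ⊆ U →
    ∫ x in Γᶜ, ∑ i, A x (v x) i * gradient φ x i = 0

namespace S9

/-- The standing hypotheses. -/
structure Hyp (n : ℕ) (d C₀ : ℝ) (Γ : Set (Euc n)) : Prop where
  hn : 2 ≤ n
  hd0 : 0 < d
  hdn : d < (n : ℝ) - 1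
  hC : 1 ≤ C₀
  hd1 : d ≤ 1
  hne : Γ.Nonempty
  hcl : IsClosed Γ
  hAR : AhlforsRegular n d C₀ Γ

variable {n : ℕ} {d C₀ : ℝ} {Γ : Set (Euc n)}

lemma Hyp.null (H : Hyp n d C₀ Γ) : volume Γ = 0 := by
  obtain ⟨γ, hγ⟩ := H.hne
  have h1 : ∀ k : ℕ, (μH[(n:ℝ)] : Measure (Euc n)) (Γ ∩ ball γ (k + 1)) = 0 := by
    intro k
    have hdn : d < n := by linarith [H.hdn]
    rcases Measure.hausdorffMeasure_zero_or_top hdn (Γ ∩ ball γ (k+1)) with h | h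
    · exact h
    · have := (H.hAR γ hγ (k+1) (by positivity)).2
      rw [h] at this
      simp at this
  have h2 : (μH[(n:ℝ)] : Measure (Euc n)) Γ = 0 := by
    have : Γ ⊆ ⋃ k : ℕ, Γ ∩ ball γ (k+1) := by
      intro x hx
      obtain ⟨k, hk⟩ := exists_nat_gt (dist x γ)
      exact mem_iUnion.2 ⟨k, hx, by rw [mem_ball]; linarith⟩
    exact measure_mono_null this (measure_iUnion_null h1)
  have h3 : (μH[(Module.finrank ℝ (Euc n) : ℝ)] : Measure (Euc n)) Γ = 0 := by
    simpa using h2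
  exact Measure.absolutelyContinuous_isAddHaarMeasure (volume : Measure (Euc n))
    (μH[(Module.finrank ℝ (Euc n) : ℝ)]) h3

/-- the truncated Riesz kernel -/
def ker (n : ℕ) (R : ℝ) (z : Euc n) : ℝ := (Iio R).indicator (fun r => r ^ (1 - (n:ℝ))) ‖z‖

lemma ker_nonneg (R : ℝ) (z : Euc n) : 0 ≤ ker n R z := by
  unfold ker indicator; split_ifs
  · positivity
  · rfl

lemma ker_meas (R : ℝ) : Measurable (ker n R) := by
  unfold ker
  exact (Measurable.indicator (by fun_prop) measurableSet_Iio).comp measurable_norm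

lemma ker_int (hn : 2 ≤ n) : ∃ c : ℝ, 0 ≤ c ∧ ∀ R > 0, 
    ∫⁻ z, ENNReal.ofReal (ker n R z) ≤ ENNReal.ofReal (c * R) := by
  have : Nontrivial (Euc n) := by
    have : Nonempty (Fin n) := ⟨⟨0, by omega⟩⟩
    infer_instance
  refine ⟨n * volume.real (ball (0:Euc n) 1), by positivity, fun R hR => ?_⟩
  have key : ∀ y ∈ Ioi (0:ℝ), y ^ (Module.finrank ℝ (Euc n) - 1) •
      (Iio R).indicator (fun r => r ^ (1 - (n:ℝ))) y = (Ioo 0 R).indicator (fun _ => (1:ℝ)) y := by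
    intro y hy
    have hy : 0 < y := hy
    by_cases h : y < R
    · simp only [finrank_euclideanSpace, Fintype.card_fin, mem_Iio, h, indicator_of_mem,
        smul_eq_mul, mem_Ioo, hy, and_self]
      rw [← Real.rpow_natCast, ← Real.rpow_add hy, Nat.cast_sub (by omega)]
      simp
    · simp [h]
  have hi : Integrable (ker n R) := by
    unfold ker
    rw [integrable_fun_norm_addHaar (volume : Measure (Euc n)) 
      (f := (Iio R).indicator (fun r => r ^ (1 - (n:ℝ))))]
    rw [integrableOn_congr_fun key measurableSet_Ioi]
    apply Integrable.integrableOn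
    rw [integrable_indicator_iff measurableSet_Ioo]
    simp
  rw [← ofReal_integral_eq_lintegral_ofReal hi (ae_of_all _ (ker_nonneg R))]
  apply ENNReal.ofReal_le_ofReal
  unfold ker
  rw [integral_fun_norm_addHaar (volume : Measure (Euc n)) 
      ((Iio R).indicator (fun r => r ^ (1 - (n:ℝ))))]
  rw [setIntegral_congr_fun measurableSet_Ioi key]
  rw [setIntegral_indicator measurableSet_Ioo]
  have : Ioi (0:ℝ) ∩ Ioo 0 R = Ioo 0 R := by ext; simp
  rw [this]
  simp [hR.le, mul_assoc]

lemma Hyp.upper (H : Hyp n d C₀ Γ) (x0 : Euc n) {ρ : ℝ} (hρ : 0 < ρ) :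
    μH[d] (Γ ∩ ball x0 ρ) ≤ ENNReal.ofReal (C₀ * (2 * ρ) ^ d) := by
  rcases (Γ ∩ ball x0 ρ).eq_empty_or_nonempty with h | ⟨γ, hγ, hb⟩
  · simp [h]
  · refine le_trans (measure_mono ?_) (H.hAR γ hγ (2*ρ) (by positivity)).2
    rintro y ⟨hy, hy'⟩
    refine ⟨hy, ?_⟩
    rw [mem_ball] at *
    linarith [dist_triangle_right y γ x0]

lemma Hyp.pt (H : Hyp n d C₀ Γ) (x0 x : Euc n) {r s : ℝ} (hx : x ∈ ball x0 r)
    (hs : infDist x Γ < s) :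
    ENNReal.ofReal (weightW n d Γ x) ≤ ENNReal.ofReal (2 ^ ((n:ℝ)-1) * C₀) *
      ∫⁻ y in Γ ∩ ball x0 (r + 2 * s), ENNReal.ofReal (ker n (2 * s) (x - y)) ∂μH[d] := by
  have hC := H.hC
  by_cases hxΓ : x ∈ Γ
  · have : weightW n d Γ x = 0 := by
      unfold weightW
      rw [infDist_zero_of_mem hxΓ, Real.zero_rpow]
      linarith [H.hdn]
    simp [this]
  obtain ⟨γ, hγ, hd⟩ := H.hcl.exists_infDist_eq_dist H.hne x
  set t := infDist x Γ with ht
  have htpos : 0 < t := (H.hcl.notMem_iff_infDist_pos H.hne).1 hxΓ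
  have hsub : Γ ∩ ball γ t ⊆ Γ ∩ ball x0 (r + 2 * s) := by
    rintro y ⟨hy, hy'⟩
    refine ⟨hy, ?_⟩
    rw [mem_ball] at *
    have := dist_triangle4 y γ x x0
    rw [dist_comm γ x] at this
    linarith
  have hlow : ∀ y ∈ Γ ∩ ball γ t, ENNReal.ofReal ((2 * t) ^ (1 - (n:ℝ))) ≤
      ENNReal.ofReal (ker n (2 * s) (x - y)) := by
    rintro y ⟨hy, hy'⟩
    apply ENNReal.ofReal_le_ofReal
    rw [mem_ball] at hy'
    have h1 : ‖x - y‖ < 2 * t := by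
      rw [← dist_eq_norm]
      linarith [dist_triangle_right x y γ]
    have h2 : 0 < ‖x - y‖ := by
      rw [norm_pos_iff, sub_ne_zero]; rintro rfl; exact hxΓ hy
    unfold ker
    rw [indicator_of_mem (by rw [mem_Iio]; linarith)]
    apply Real.rpow_le_rpow_of_nonpos h2 h1.le
    linarith [H.hdn, H.hd0]
  have hme : MeasurableSet (Γ ∩ ball γ t) := H.hcl.measurableSet.inter measurableSet_ball
  calc ENNReal.ofReal (weightW n d Γ x) 
      = ENNReal.ofReal (2 ^ ((n:ℝ)-1) * C₀) * (ENNReal.ofReal ((2 * t) ^ (1 - (n:ℝ))) * 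
        ENNReal.ofReal (C₀⁻¹ * t ^ d)) := by
        rw [← ENNReal.ofReal_mul (by positivity), ← ENNReal.ofReal_mul (by positivity)]
        congr 1
        unfold weightW
        rw [← ht, Real.mul_rpow (by norm_num) htpos.le]
        have e1 : t ^ (d + 1 - (n:ℝ)) = t ^ (1 - (n:ℝ)) * t ^ d := by
          rw [← Real.rpow_add htpos]; ring_nf
        have e2 : (2:ℝ) ^ ((n:ℝ)-1) * 2 ^ (1 - (n:ℝ)) = 1 := by
          rw [← Real.rpow_add (by norm_num)]; simp
        rw [e1]
        have : C₀ ≠ 0 := by linarith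
        calc t ^ (1 - (n:ℝ)) * t ^ d = (2 ^ ((n:ℝ)-1) * 2 ^ (1 - (n:ℝ))) * (C₀ * C₀⁻¹) 
              * (t ^ (1 - (n:ℝ)) * t ^ d) := by rw [e2, mul_inv_cancel₀ this]; ring
          _ = _ := by ring
    _ ≤ ENNReal.ofReal (2 ^ ((n:ℝ)-1) * C₀) * (ENNReal.ofReal ((2 * t) ^ (1 - (n:ℝ))) * 
        μH[d] (Γ ∩ ball γ t)) := by
        gcongr
        exact (H.hAR γ hγ t htpos).1
    _ = ENNReal.ofReal (2 ^ ((n:ℝ)-1) * C₀) * 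
        ∫⁻ y in Γ ∩ ball γ t, ENNReal.ofReal ((2 * t) ^ (1 - (n:ℝ))) ∂μH[d] := by
        rw [setLIntegral_const]
    _ ≤ ENNReal.ofReal (2 ^ ((n:ℝ)-1) * C₀) * 
        ∫⁻ y in Γ ∩ ball γ t, ENNReal.ofReal (ker n (2 * s) (x - y)) ∂μH[d] := by
        gcongr 1
        exact setLIntegral_mono' hme hlow
    _ ≤ _ := by
        gcongr 1
        exact lintegral_mono_set hsub

lemma infDist_meas : Measurable (fun x : Euc n => infDist x Γ) :=
  (continuous_infDist_pt Γ).measurable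

lemma weight_meas : Measurable (weightW n d Γ) := by
  unfold weightW
  exact (continuous_infDist_pt Γ).measurable.pow_const _

lemma Hyp.strip (H : Hyp n d C₀ Γ) : ∃ C : ℝ, 0 ≤ C ∧ ∀ (x0 : Euc n) (r s : ℝ), 0 < r → 0 < s →
    measW n d Γ (ball x0 r ∩ {x | infDist x Γ < s}) ≤ ENNReal.ofReal (C * s * (r + 2 * s) ^ d) := by
  obtain ⟨c, hc, hker⟩ := ker_int H.hn
  have hC := H.hC
  refine ⟨(2 ^ ((n:ℝ)-1) * C₀) * (c * 2) * (C₀ * 2 ^ d), by positivity, fun x0 r s hr hs => ?_⟩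
  have hS : MeasurableSet (ball x0 r ∩ {x | infDist x Γ < s}) :=
    measurableSet_ball.inter (measurableSet_lt infDist_meas measurable_const)
  set G := Γ ∩ ball x0 (r + 2 * s)
  set μ : Measure (Euc n) := (μH[d]).restrict G with hμ
  have hμle : μ univ ≤ ENNReal.ofReal (C₀ * (2 * (r + 2 * s)) ^ d) := by
    rw [hμ, Measure.restrict_apply_univ]
    exact H.upper x0 (by positivity)
  have : IsFiniteMeasure μ := ⟨hμle.trans_lt ENNReal.ofReal_lt_top⟩
  rw [measW, withDensity_apply _ hS]
  have hm : Measurable (Function.uncurry fun (x y : Euc n) => ENNReal.ofReal (ker n (2 * s) (x - y))) := by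
    exact ((ker_meas _).comp (measurable_fst.sub measurable_snd)).ennreal_ofReal
  calc ∫⁻ x in ball x0 r ∩ {x | infDist x Γ < s}, ENNReal.ofReal (weightW n d Γ x)
      ≤ ∫⁻ x in ball x0 r ∩ {x | infDist x Γ < s}, ENNReal.ofReal (2 ^ ((n:ℝ)-1) * C₀) *
        ∫⁻ y, ENNReal.ofReal (ker n (2 * s) (x - y)) ∂μ :=
        setLIntegral_mono' hS fun x hx => H.pt x0 x hx.1 hx.2
    _ ≤ ∫⁻ x, ENNReal.ofReal (2 ^ ((n:ℝ)-1) * C₀) *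
        ∫⁻ y, ENNReal.ofReal (ker n (2 * s) (x - y)) ∂μ := setLIntegral_le_lintegral _ _
    _ = ENNReal.ofReal (2 ^ ((n:ℝ)-1) * C₀) *
        ∫⁻ x, ∫⁻ y, ENNReal.ofReal (ker n (2 * s) (x - y)) ∂μ := by
        rw [lintegral_const_mul]
        exact hm.lintegral_prod_right
    _ = ENNReal.ofReal (2 ^ ((n:ℝ)-1) * C₀) *
        ∫⁻ y, (∫⁻ x, ENNReal.ofReal (ker n (2 * s) (x - y))) ∂μ := by
        rw [lintegral_lintegral_swap hm.aemeasurable]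
    _ ≤ ENNReal.ofReal (2 ^ ((n:ℝ)-1) * C₀) *
        ∫⁻ y, ENNReal.ofReal (c * (2 * s)) ∂μ := by
        gcongr with y
        rw [lintegral_sub_right_eq_self (fun z => ENNReal.ofReal (ker n (2 * s) z))]
        exact hker _ (by positivity)
    _ ≤ ENNReal.ofReal (2 ^ ((n:ℝ)-1) * C₀) *
        (ENNReal.ofReal (c * (2 * s)) * ENNReal.ofReal (C₀ * (2 * (r + 2 * s)) ^ d)) := by
        rw [lintegral_const]
        gcongr
    _ = _ := by
        rw [← ENNReal.ofReal_mul (by positivity), ← ENNReal.ofReal_mul (by positivity),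
          Real.mul_rpow (by norm_num) (by positivity)]
        congr 1; ring

lemma Hyp.ballm (H : Hyp n d C₀ Γ) : ∃ C : ℝ, 0 ≤ C ∧ ∀ (x0 : Euc n) (r : ℝ), 0 < r →
    measW n d Γ (ball x0 r) ≤ ENNReal.ofReal (C * r ^ (d + 1)) := by
  obtain ⟨C, hC, h⟩ := H.strip
  refine ⟨C * 3 * 7 ^ d + volume.real (ball (0 : Euc n) 1), by positivity, fun x0 r hr => ?_⟩
  by_cases hx : infDist x0 Γ < 2 * r
  · have e : ball x0 r = ball x0 r ∩ {x | infDist x Γ < 3 * r} := by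
      ext x
      simp only [mem_ball, mem_inter_iff, mem_ofPred_eq, iff_self_and]
      intro hxx
      linarith [infDist_le_infDist_add_dist (s := Γ) (x := x) (y := x0)]
    rw [e]
    refine (h x0 r (3 * r) hr (by positivity)).trans (ENNReal.ofReal_le_ofReal ?_)
    have : r + 2 * (3 * r) = 7 * r := by ring
    rw [this, Real.mul_rpow (by norm_num) hr.le, Real.rpow_add hr, Real.rpow_one]
    have : 0 ≤ volume.real (ball (0 : Euc n) 1) * (r ^ d * r) := by positivity
    nlinarith
  · push Not at hx
    rw [measW, withDensity_apply _ measurableSet_ball]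
    calc ∫⁻ x in ball x0 r, ENNReal.ofReal (weightW n d Γ x) 
        ≤ ∫⁻ x in ball x0 r, ENNReal.ofReal (r ^ (d + 1 - (n:ℝ))) := by
          refine setLIntegral_mono' measurableSet_ball fun x hxx => ENNReal.ofReal_le_ofReal ?_
          unfold weightW
          rw [mem_ball] at hxx
          apply Real.rpow_le_rpow_of_nonpos hr
          · linarith [infDist_le_infDist_add_dist (s := Γ) (x := x0) (y := x), dist_comm x x0]
          · linarith [H.hdn]
      _ = ENNReal.ofReal (volume.real (ball (0 : Euc n) 1) * r ^ (d + 1)) := by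
          rw [setLIntegral_const, Measure.addHaar_ball_of_pos _ _ hr, 
            ← ENNReal.ofReal_toReal (measure_ball_lt_top (x := (0:Euc n)) (r := 1)).ne,
            ← ENNReal.ofReal_mul (by positivity), ← ENNReal.ofReal_mul (by positivity)]
          congr 1
          rw [finrank_euclideanSpace, Fintype.card_fin, ← Real.rpow_natCast, 
            show d + 1 = (d + 1 - n) + n by ring, Real.rpow_add hr]
          simp only [sub_add_cancel, Measure.real]
          ring
      _ ≤ _ := by
          apply ENNReal.ofReal_le_ofReal
          gcongr
          have : 0 ≤ C * 3 * 7 ^ d := by positivity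
          linarith

end S9

namespace S9
open scoped Convolution
variable {n : ℕ} {d C₀ : ℝ} {Γ : Set (Euc n)}

/-- scale -/
def eps (j : ℕ) : ℝ := 1 / ((j:ℝ) + 1)

lemma eps_pos (j : ℕ) : 0 < eps j := by unfold eps; positivity

lemma eps_tendsto : Tendsto eps atTop (𝓝 0) := tendsto_one_div_add_atTop_nhds_zero_nat

/-- bump -/
def bmp (n j : ℕ) : ContDiffBump (0 : Euc n) :=
  ⟨eps j / 2, eps j, half_pos (eps_pos j), half_lt_self (eps_pos j)⟩

/-- mollifier -/
def rho (n j : ℕ) : Euc n → ℝ := (bmp n j).normed volume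

/-- mollification -/
def moll {F : Type*} [NormedAddCommGroup F] [NormedSpace ℝ F] (j : ℕ) (f : Euc n → F) : Euc n → F :=
  (rho n j ⋆[ContinuousLinearMap.lsmul ℝ ℝ, volume] f)

section
variable {F : Type*} [NormedAddCommGroup F] [NormedSpace ℝ F]

lemma moll_eq (j : ℕ) (f : Euc n → F) (x : Euc n) :
    moll j f x = ∫ y, rho n j (x - y) • f y := by
  unfold moll
  rw [convolution_eq_swap]
  rfl

lemma rho_nonneg (j : ℕ) (x : Euc n) : 0 ≤ rho n j x := (bmp n j).nonneg_normed x

lemma rho_le (j : ℕ) (x : Euc n) : rho n j x ≤ 2 ^ n / volume.real (ball (0 : Euc n) (eps j)) := by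
  have := (bmp n j).normed_le_div_measure_closedBall_rOut (volume : Measure (Euc n)) 2 
    (le_of_eq (show eps j = 2 * (eps j / 2) by ring)) x
  rw [finrank_euclideanSpace, Fintype.card_fin] at this
  refine this.trans (le_of_eq ?_)
  congr 1
  show volume.real (closedBall (0 : Euc n) (eps j)) = _
  rw [measureReal_def, measureReal_def, Measure.addHaar_closedBall' _ _ (eps_pos j).le, Measure.addHaar_ball_of_pos _ _ (eps_pos j), Measure.addHaar_unitClosedBall_eq_addHaar_unitBall]

lemma rho_zero (j : ℕ) (x : Euc n) (hx : x ∉ ball (0 : Euc n) (eps j)) : rho n j x = 0 := by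
  have : Function.support (rho n j) = ball (0 : Euc n) (eps j) :=
    (bmp n j).support_normed_eq (μ := volume)
  rw [← this] at hx
  simpa using hx

lemma rho_contDiff (j : ℕ) : ContDiff ℝ (⊤ : ℕ∞) (rho n j) := (bmp n j).contDiff_normed

lemma rho_cs (j : ℕ) : HasCompactSupport (rho n j) := (bmp n j).hasCompactSupport_normed

lemma moll_enorm (j : ℕ) (f : Euc n → F) (x : Euc n) :
    ‖moll j f x‖ₑ ≤ ENNReal.ofReal (2 ^ n / volume.real (ball (0 : Euc n) (eps j))) *
      ∫⁻ y in ball x (eps j), ‖f y‖ₑ := by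
  rw [moll_eq]
  refine (enorm_integral_le_lintegral_enorm _).trans ?_
  rw [← lintegral_const_mul' _ _ (by simp), ← lintegral_indicator measurableSet_ball]
  apply lintegral_mono
  intro y
  by_cases hy : y ∈ ball x (eps j)
  · simp only [hy, indicator_of_mem, enorm_smul]
    gcongr
    rw [Real.enorm_eq_ofReal (rho_nonneg _ _)]
    exact ENNReal.ofReal_le_ofReal (rho_le _ _)
  · simp only [hy, not_false_eq_true, indicator_of_notMem, nonpos_iff_eq_zero]
    rw [rho_zero]
    · simp
    · simpa [dist_eq_norm, norm_sub_rev] using hy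

end

lemma sq_lint {α : Type*} [MeasurableSpace α] (μ : Measure α) {g : α → ℝ≥0∞} (hg : AEMeasurable g μ) :
    (∫⁻ x, g x ∂μ) ^ 2 ≤ μ univ * ∫⁻ x, g x ^ 2 ∂μ := by
  have := ENNReal.lintegral_mul_le_Lp_mul_Lq μ Real.HolderConjugate.two_two hg 
    (aemeasurable_const (b := (1:ℝ≥0∞)))
  simp only [Pi.mul_apply, mul_one, ENNReal.rpow_ofNat, one_pow, lintegral_const, one_mul] at this
  calc _ ≤ ((∫⁻ (a : α), g a ^ 2 ∂μ) ^ (1 / 2 : ℝ) * μ univ ^ (1 / 2 : ℝ)) ^ 2 := by gcongr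
    _ = _ := by
      rw [mul_pow, ← ENNReal.rpow_natCast, ← ENNReal.rpow_natCast, ← ENNReal.rpow_mul, ← ENNReal.rpow_mul]
      simp [mul_comm]

lemma Hyp.locfin (H : Hyp n d C₀ Γ) : IsLocallyFiniteMeasure (measW n d Γ) := by
  obtain ⟨C, -, h⟩ := H.ballm
  exact ⟨fun x => ⟨ball x 1, ball_mem_nhds _ one_pos, (h x 1 one_pos).trans_lt ENNReal.ofReal_lt_top⟩⟩

lemma measW_ac : measW n d Γ ≪ volume := withDensity_absolutelyContinuous _ _

/-- exponent -/
lemma Hyp.wv (H : Hyp n d C₀ Γ) {x : Euc n} (hx : x ∉ Γ) :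
    infDist x Γ ^ ((n:ℝ) - 1 - d) * weightW n d Γ x = 1 := by
  have htpos : 0 < infDist x Γ := (H.hcl.notMem_iff_infDist_pos H.hne).1 hx
  unfold weightW
  rw [← Real.rpow_add htpos]
  have : (n:ℝ) - 1 - d + (d + 1 - n) = 0 := by ring
  rw [this, Real.rpow_zero]

lemma lint_measW (f : Euc n → ℝ≥0∞) (s : Set (Euc n)) (hs : MeasurableSet s)  :
    ∫⁻ x in s, f x ∂(measW n d Γ) = ∫⁻ x in s, ENNReal.ofReal (weightW n d Γ x) * f x := by
  unfold measW
  rw [restrict_withDensity hs, lintegral_withDensity_eq_lintegral_mul_non_measurable]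
  · rfl
  · exact weight_meas.ennreal_ofReal
  · exact ae_of_all _ (by simp)

lemma Hyp.lint_le (H : Hyp n d C₀ Γ) (f : Euc n → ℝ≥0∞) (s : Set (Euc n)) (hs : MeasurableSet s)
    (D : ℝ) (hD : ∀ x ∈ s, infDist x Γ ≤ D) :
    ∫⁻ x in s, f x ≤ ENNReal.ofReal (D ^ ((n:ℝ) - 1 - d)) * ∫⁻ x in s, f x ∂(measW n d Γ) := by
  rw [lint_measW _ _ hs, ← lintegral_const_mul' _ _ (by simp)]
  apply lintegral_mono_ae
  have h0 : ∀ᵐ x ∂(volume : Measure (Euc n)), x ∉ Γ := by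
    rw [ae_iff]; simpa using H.null
  filter_upwards [ae_restrict_of_ae h0, ae_restrict_mem hs] with x hx hxs
  rw [← mul_assoc, ← ENNReal.ofReal_mul' (show 0 ≤ weightW n d Γ x from Real.rpow_nonneg infDist_nonneg _)]
  conv_lhs => rw [← one_mul (f x)]
  gcongr
  rw [← ENNReal.ofReal_one]
  apply ENNReal.ofReal_le_ofReal
  refine (H.wv hx).symm.le.trans ?_
  exact mul_le_mul_of_nonneg_right (Real.rpow_le_rpow infDist_nonneg (hD x hxs) (by linarith [H.hdn]))
    (Real.rpow_nonneg infDist_nonneg _)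

lemma Hyp.Tint (H : Hyp n d C₀ Γ) : ∃ C : ℝ, 0 ≤ C ∧ ∀ (y : Euc n) (r : ℝ), 0 < r →
    ∫⁻ x in ball y r, ENNReal.ofReal ((infDist x Γ + r) ^ ((n:ℝ) - 1 - d)) ∂(measW n d Γ) ≤
      ENNReal.ofReal (C * r ^ n) := by
  obtain ⟨C, hC, h⟩ := H.ballm
  set a := (n:ℝ) - 1 - d with ha
  have hapos : 0 < a := by linarith [H.hdn]
  refine ⟨2 ^ a * (volume.real (ball (0 : Euc n) 1) + C), by positivity, fun y r hr => ?_⟩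
  rw [lint_measW _ _ measurableSet_ball]
  have hw : ∀ x, 0 ≤ weightW n d Γ x := fun x => Real.rpow_nonneg infDist_nonneg _
  calc _ ≤ ∫⁻ x in ball y r, (ENNReal.ofReal (2 ^ a) + ENNReal.ofReal (2 ^ a * r ^ a) * 
          ENNReal.ofReal (weightW n d Γ x)) := by
        apply lintegral_mono
        intro x
        have hr' : 0 ≤ r ^ a := by positivity
        dsimp only
        rw [← ENNReal.ofReal_mul (hw x), ← ENNReal.ofReal_mul (by positivity), 
          ← ENNReal.ofReal_add (by positivity) (mul_nonneg (by positivity) (hw x))]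
        apply ENNReal.ofReal_le_ofReal
        by_cases hx : x ∈ Γ
        · have : weightW n d Γ x = 0 := by
            unfold weightW
            rw [infDist_zero_of_mem hx, Real.zero_rpow]
            linarith [H.hdn]
          rw [this]; simp; positivity
        have e := H.wv hx
        rw [← ha] at e
        rcases le_total (infDist x Γ) r with h1 | h1
        · have : (infDist x Γ + r) ^ a ≤ 2 ^ a * r ^ a := by
            rw [← Real.mul_rpow (by norm_num) hr.le]
            have := infDist_nonneg (x := x) (s := Γ)
            gcongr; linarith
          have h2 : (0:ℝ) ≤ 2 ^ a := by positivity
          nlinarith [mul_le_mul_of_nonneg_left this (hw x)]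
        · have : (infDist x Γ + r) ^ a ≤ 2 ^ a * infDist x Γ ^ a := by
            rw [← Real.mul_rpow (by norm_num) infDist_nonneg]
            have := infDist_nonneg (x := x) (s := Γ)
            gcongr; linarith
          have h2 : (0:ℝ) ≤ 2 ^ a := by positivity
          have h3 := mul_le_mul_of_nonneg_left this (hw x)
          have h4 : weightW n d Γ x * (2 ^ a * infDist x Γ ^ a) = 2 ^ a := by
            rw [mul_left_comm, mul_comm (weightW n d Γ x), e, mul_one]
          rw [h4] at h3
          have : 0 ≤ 2 ^ a * r ^ a * weightW n d Γ x := mul_nonneg (by positivity) (hw x)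
          linarith
    _ = ENNReal.ofReal (2 ^ a) * volume (ball y r) + ENNReal.ofReal (2 ^ a * r ^ a) * 
          measW n d Γ (ball y r) := by
        rw [lintegral_add_left measurable_const, setLIntegral_const, lintegral_const_mul' _ _ (by simp),
          measW, withDensity_apply _ measurableSet_ball]
    _ ≤ ENNReal.ofReal (2 ^ a) * ENNReal.ofReal (r ^ n * volume.real (ball (0 : Euc n) 1)) 
        + ENNReal.ofReal (2 ^ a * r ^ a) * ENNReal.ofReal (C * r ^ (d + 1)) := by
        gcongr
        · rw [Measure.addHaar_ball_of_pos _ _ hr, ENNReal.ofReal_mul (by positivity), measureReal_def,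
            ENNReal.ofReal_toReal measure_ball_lt_top.ne]
          simp
        · exact h y r hr
    _ = _ := by
        rw [← ENNReal.ofReal_mul (by positivity), ← ENNReal.ofReal_mul (by positivity),
          ← ENNReal.ofReal_add (by positivity) (by positivity)]
        congr 1
        have : r ^ n = r ^ a * r ^ (d+1) := by
          rw [← Real.rpow_add hr, ← Real.rpow_natCast]; congr 1; rw [ha]; ring
        rw [this]; ring

lemma Hyp.moll_bd (H : Hyp n d C₀ Γ) {F : Type*} [NormedAddCommGroup F] [NormedSpace ℝ F] :
    ∃ A : ℝ≥0∞, A ≠ ⊤ ∧ ∀ (j : ℕ) (f : Euc n → F), AEStronglyMeasurable f volume →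
      ∫⁻ x, ‖moll j f x‖ₑ ^ 2 ∂(measW n d Γ) ≤ A * ∫⁻ x, ‖f x‖ₑ ^ 2 ∂(measW n d Γ) := by
  obtain ⟨C, hC, hT⟩ := H.Tint
  have := H.locfin
  set b := volume.real (ball (0 : Euc n) 1) with hb
  have hbpos : 0 < b := by
    rw [hb, measureReal_def]
    exact ENNReal.toReal_pos (measure_ball_pos _ _ one_pos).ne' measure_ball_lt_top.ne
  refine ⟨ENNReal.ofReal (2 ^ n * 2 ^ n * C / b), by simp, fun j f hf => ?_⟩
  set m := measW n d Γ with hm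
  set ε := eps j with hε
  have hεp : 0 < ε := eps_pos j
  have hvol : ∀ x : Euc n, volume (ball x ε) = ENNReal.ofReal (ε ^ n * b) := by
    intro x
    rw [Measure.addHaar_ball_of_pos _ _ hεp, ENNReal.ofReal_mul (by positivity), hb, measureReal_def,
            ENNReal.ofReal_toReal measure_ball_lt_top.ne]
    simp
  have hvolr : volume.real (ball (0 : Euc n) ε) = ε ^ n * b := by
    rw [measureReal_def, hvol, ENNReal.toReal_ofReal (by positivity)]
  set T : Euc n → ℝ≥0∞ := fun x => ENNReal.ofReal ((infDist x Γ + ε) ^ ((n:ℝ) - 1 - d)) with hTdef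
  have hTm : Measurable T := ((infDist_meas.add_const _).pow_const _).ennreal_ofReal
  set A0 := ENNReal.ofReal (2 ^ n / (ε ^ n * b)) with hA0
  have hfe : AEMeasurable (fun x => ‖f x‖ₑ) volume := hf.enorm
  have hfm : AEMeasurable (fun x => ‖f x‖ₑ ^ 2) m := (hfe.pow_const 2).mono_ac measW_ac
  have step : ∀ x, ‖moll j f x‖ₑ ^ 2 ≤ (A0 ^ 2 * ENNReal.ofReal (ε ^ n * b)) * 
      ∫⁻ y, T x * (ball x ε).indicator (fun y => ‖f y‖ₑ ^ 2) y ∂m := by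
    intro x
    calc ‖moll j f x‖ₑ ^ 2 ≤ (A0 * ∫⁻ y in ball x ε, ‖f y‖ₑ) ^ 2 := by
          gcongr
          have := moll_enorm j f x
          rwa [← hε, hvolr] at this
      _ = A0 ^ 2 * (∫⁻ y in ball x ε, ‖f y‖ₑ) ^ 2 := mul_pow _ _ _
      _ ≤ A0 ^ 2 * (ENNReal.ofReal (ε ^ n * b) * ∫⁻ y in ball x ε, ‖f y‖ₑ ^ 2) := by
          gcongr
          have := sq_lint (volume.restrict (ball x ε)) hfe.restrict
          rwa [Measure.restrict_apply_univ, hvol] at this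
      _ ≤ A0 ^ 2 * (ENNReal.ofReal (ε ^ n * b) * (T x * ∫⁻ y in ball x ε, ‖f y‖ₑ ^ 2 ∂m)) := by
          gcongr
          apply H.lint_le _ _ measurableSet_ball
          intro y hy
          rw [mem_ball] at hy
          linarith [infDist_le_infDist_add_dist (s := Γ) (x := y) (y := x)]
      _ = _ := by
          rw [lintegral_const_mul' _ _ (by simp [hTdef]), lintegral_indicator measurableSet_ball]
          ring
  calc ∫⁻ x, ‖moll j f x‖ₑ ^ 2 ∂m ≤ ∫⁻ x, (A0 ^ 2 * ENNReal.ofReal (ε ^ n * b)) * 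
      ∫⁻ y, T x * (ball x ε).indicator (fun y => ‖f y‖ₑ ^ 2) y ∂m ∂m := lintegral_mono step
    _ = (A0 ^ 2 * ENNReal.ofReal (ε ^ n * b)) * 
      ∫⁻ x, ∫⁻ y, T x * (ball x ε).indicator (fun y => ‖f y‖ₑ ^ 2) y ∂m ∂m := by
        rw [lintegral_const_mul' _ _ (by simp [hA0, ENNReal.mul_eq_top])]
    _ = (A0 ^ 2 * ENNReal.ofReal (ε ^ n * b)) * 
      ∫⁻ y, ∫⁻ x, T x * (ball x ε).indicator (fun y => ‖f y‖ₑ ^ 2) y ∂m ∂m := by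
        rw [lintegral_lintegral_swap]
        have hset : MeasurableSet {p : Euc n × Euc n | dist p.2 p.1 < ε} :=
          measurableSet_lt (by fun_prop) measurable_const
        have : (Function.uncurry fun x y => T x * (ball x ε).indicator (fun y => ‖f y‖ₑ ^ 2) y) =
          fun p => T p.1 * {p : Euc n × Euc n | dist p.2 p.1 < ε}.indicator (fun p => ‖f p.2‖ₑ ^ 2) p := by
          ext ⟨x, y⟩
          simp [Function.uncurry, indicator]
        rw [this]
        exact (hTm.comp measurable_fst).aemeasurable.mul ((hfm.comp_snd).indicator hset)
    _ ≤ (A0 ^ 2 * ENNReal.ofReal (ε ^ n * b)) * 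
      ∫⁻ y, ENNReal.ofReal (C * ε ^ n) * ‖f y‖ₑ ^ 2 ∂m := by
        gcongr with y
        calc ∫⁻ x, T x * (ball x ε).indicator (fun y => ‖f y‖ₑ ^ 2) y ∂m
            = ∫⁻ x in ball y ε, T x * ‖f y‖ₑ ^ 2 ∂m := by
              rw [← lintegral_indicator measurableSet_ball]
              congr 1; ext x
              simp [indicator, mem_ball, dist_comm]
          _ = (∫⁻ x in ball y ε, T x ∂m) * ‖f y‖ₑ ^ 2 := by
              rw [lintegral_mul_const' _ _ (by simp)]
          _ ≤ _ := by
              gcongr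
              exact hT y ε hεp
    _ = _ := by
        rw [lintegral_const_mul' _ _ (by simp), ← mul_assoc, hA0, ← ENNReal.ofReal_pow (by positivity),
          ← ENNReal.ofReal_mul (by positivity), ← ENNReal.ofReal_mul (by positivity)]
        congr 2
        field_simp

end S9

namespace S9
set_option linter.unusedSectionVars false
open scoped Convolution
variable {n : ℕ} {d C₀ : ℝ} {Γ : Set (Euc n)}

section
variable {F : Type*} [NormedAddCommGroup F] [NormedSpace ℝ F] [CompleteSpace F]

lemma eps_le_one (j : ℕ) : eps j ≤ 1 := by
  unfold eps
  rw [div_le_one (by positivity)]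
  linarith [Nat.cast_nonneg (α := ℝ) j]

lemma moll_const (j : ℕ) {f : Euc n → F} {x : Euc n} (h : ∀ y ∈ ball x (eps j), f y = f x) :
    moll j f x = f x :=
  (bmp n j).normed_convolution_eq_right h

lemma moll_dist (j : ℕ) {f : Euc n → F} {x : Euc n} (hf : AEStronglyMeasurable f volume) {η : ℝ}
    (h : ∀ y ∈ ball x (eps j), dist (f y) (f x) ≤ η) :
    dist (moll j f x) (f x) ≤ η :=
  (bmp n j).dist_normed_convolution_le hf h

lemma moll_ae {f : Euc n → F} (hf : LocallyIntegrable f volume) :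
    ∀ᵐ x, Tendsto (fun j => moll j f x) atTop (𝓝 (f x)) := 
  ContDiffBump.ae_convolution_tendsto_right_of_locallyIntegrable (φ := fun j => bmp n j) (K := 2)
    eps_tendsto (Eventually.of_forall fun j => le_of_eq (show eps j = 2 * (eps j / 2) by ring)) hf

lemma moll_contDiff (j : ℕ) {f : Euc n → F} (hf : LocallyIntegrable f volume) :
    ContDiff ℝ (⊤ : ℕ∞) (moll j f) :=
  (rho_cs j).contDiff_convolution_left _ (rho_contDiff j) hf

lemma rho_integral (j : ℕ) : ∫ x, rho n j x = 1 := (bmp n j).integral_normed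

lemma moll_exists (j : ℕ) {f : Euc n → F} (hf : LocallyIntegrable f volume) (x : Euc n) :
    Integrable (fun y => rho n j (x - y) • f y) := by
  have : ConvolutionExistsAt (rho n j) f x (ContinuousLinearMap.lsmul ℝ ℝ) volume :=
    (rho_cs j).convolutionExists_left _ (rho_contDiff j).continuous hf x
  exact this.integrable_swap

lemma moll_sub (j : ℕ) {f g : Euc n → F} (hf : LocallyIntegrable f volume) 
    (hg : LocallyIntegrable g volume) (x : Euc n) :
    moll j (fun y => f y - g y) x = moll j f x - moll j g x := by
  simp only [moll_eq, smul_sub]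
  exact integral_sub (moll_exists j hf x) (moll_exists j hg x)

lemma moll_norm_le (j : ℕ) {f : Euc n → F} {B : ℝ} (hB : ∀ x, ‖f x‖ ≤ B) (x : Euc n) :
    ‖moll j f x‖ ≤ B := by
  rw [moll_eq]
  have hi : Integrable (fun y => rho n j (x - y)) := 
    ((rho_contDiff j).continuous.integrable_of_hasCompactSupport (rho_cs j)).comp_sub_left x
  calc _ ≤ ∫ y, rho n j (x - y) * B := by
        apply norm_integral_le_of_norm_le (hi.mul_const B)
        apply ae_of_all
        intro y
        rw [norm_smul, Real.norm_of_nonneg (rho_nonneg _ _)]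
        exact mul_le_mul_of_nonneg_left (hB y) (rho_nonneg _ _)
    _ = B := by
        rw [integral_mul_const, integral_sub_left_eq_self (rho n j) volume x, rho_integral, one_mul]

lemma Hyp.moll_cc (H : Hyp n d C₀ Γ) {g : Euc n → F} (hg : Continuous g) (hgs : HasCompactSupport g) :
    Tendsto (fun j => eLpNorm (fun x => moll j g x - g x) 2 (measW n d Γ)) atTop (𝓝 0) := by
  have := H.locfin
  set m := measW n d Γ
  have hK : IsCompact (cthickening 1 (tsupport g)) := hgs.isCompact.cthickening
  set K := cthickening 1 (tsupport g) with hKdef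
  have hmK : m K ≠ ⊤ := hK.measure_lt_top.ne
  rw [ENNReal.tendsto_atTop_zero]
  intro e he
  -- choose η
  obtain ⟨η, hη, hη2⟩ : ∃ η : ℝ, 0 < η ∧ m K ^ (1 / (2:ℝ)) * ENNReal.ofReal η ≤ e := by
    have ht : Tendsto (fun η : ℝ => m K ^ (1 / (2:ℝ)) * ENNReal.ofReal η) (𝓝[>] 0) (𝓝 (m K ^ (1 / (2:ℝ)) * ENNReal.ofReal 0)) := by
      apply ENNReal.Tendsto.const_mul
      · exact (ENNReal.continuous_ofReal.tendsto 0).mono_left nhdsWithin_le_nhds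
      · right; simp [hmK]
    simp only [ENNReal.ofReal_zero, mul_zero] at ht
    have h1 := (ht.eventually (ge_mem_nhds he)).and self_mem_nhdsWithin
    obtain ⟨η, h2, h3⟩ := h1.exists
    exact ⟨η, h3, h2⟩
  have huc := hgs.uniformContinuous_of_continuous hg
  obtain ⟨δ, hδ, hδ2⟩ := Metric.uniformContinuous_iff.1 huc η hη
  obtain ⟨N, hN⟩ := eventually_atTop.1 (eps_tendsto.eventually (gt_mem_nhds hδ))
  refine ⟨N, fun j hj => ?_⟩
  have h1 : ∀ x, ‖moll j g x - g x‖ ≤ η := by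
    intro x
    rw [← dist_eq_norm]
    apply moll_dist j hg.aestronglyMeasurable
    intro y hy
    exact (hδ2 (lt_trans hy (hN j hj))).le
  have h2 : ∀ x, x ∉ K → moll j g x - g x = 0 := by
    intro x hx
    have h3 : ∀ y ∈ ball x (eps j), g y = 0 := by
      intro y hy
      by_contra h
      apply hx
      apply mem_cthickening_of_dist_le x y _ _ (subset_tsupport g h)
      rw [dist_comm]
      exact (le_of_lt hy).trans (eps_le_one j)
    rw [moll_const j, sub_self]
    intro y hy
    rw [h3 y hy, h3 x (mem_ball_self (eps_pos j))]
  have h4 : (fun x => moll j g x - g x) = K.indicator (fun x => moll j g x - g x) := by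
    ext x
    by_cases hx : x ∈ K
    · simp [hx]
    · simp [hx, h2 x hx]
  rw [h4, eLpNorm_indicator_eq_eLpNorm_restrict hK.isClosed.measurableSet]
  refine (eLpNorm_le_of_ae_bound (ae_of_all _ h1)).trans ?_
  rw [Measure.restrict_apply_univ]
  simpa using hη2

lemma eLp_sq {α : Type*} [MeasurableSpace α] (μ : Measure α) (f : α → F) :
    eLpNorm f 2 μ = (∫⁻ x, ‖f x‖ₑ ^ 2 ∂μ) ^ (1 / 2 : ℝ) := by
  rw [eLpNorm_eq_lintegral_rpow_enorm_toReal (by simp) (by simp)]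
  simp

lemma Hyp.moll_bd' (H : Hyp n d C₀ Γ) :
    ∃ A : ℝ≥0∞, A ≠ ⊤ ∧ ∀ (j : ℕ) (f : Euc n → F), AEStronglyMeasurable f volume →
      eLpNorm (moll j f) 2 (measW n d Γ) ≤ A * eLpNorm f 2 (measW n d Γ) := by
  obtain ⟨A, hA, h⟩ := H.moll_bd (F := F)
  refine ⟨A ^ (1/2 : ℝ), by simp [hA], fun j f hf => ?_⟩
  rw [eLp_sq, eLp_sq, ← ENNReal.mul_rpow_of_nonneg _ _ (by norm_num)]
  gcongr
  exact h j f hf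

lemma Hyp.moll_L2 (H : Hyp n d C₀ Γ) {f : Euc n → F} (hf : LocallyIntegrable f volume)
    (hf2 : MemLp f 2 (measW n d Γ)) :
    Tendsto (fun j => eLpNorm (fun x => moll j f x - f x) 2 (measW n d Γ)) atTop (𝓝 0) := by
  have := H.locfin
  obtain ⟨A, hA, hbd⟩ := H.moll_bd' (F := F)
  set m := measW n d Γ
  rw [ENNReal.tendsto_atTop_zero]
  intro e he
  obtain ⟨η, hη, hη2⟩ : ∃ η : ℝ≥0∞, 0 < η ∧ A * η + η + η ≤ e := by
    have ht : Tendsto (fun η : ℝ≥0∞ => A * η + η + η) (𝓝[>] 0) (𝓝 (A * 0 + 0 + 0)) := by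
      have t0 : Tendsto (fun η : ℝ≥0∞ => η) (𝓝[>] 0) (𝓝 0) := tendsto_id.mono_left nhdsWithin_le_nhds
      exact ((ENNReal.Tendsto.const_mul t0 (Or.inr hA)).add t0).add t0
    simp only [mul_zero, add_zero] at ht
    have h1 := (ht.eventually (ge_mem_nhds he)).and self_mem_nhdsWithin
    obtain ⟨η, h2, h3⟩ := h1.exists
    exact ⟨η, h3, h2⟩
  obtain ⟨g, hgs, hfg, hg, hg2⟩ := hf2.exists_hasCompactSupport_eLpNorm_sub_le (by simp) hη.ne'
  have hgl : LocallyIntegrable g volume := hg.locallyIntegrable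
  obtain ⟨N, hN⟩ := ENNReal.tendsto_atTop_zero.1 (H.moll_cc hg hgs) η hη
  refine ⟨N, fun j hj => ?_⟩
  have e1 : (fun x => moll j f x - f x) = moll j (fun y => f y - g y) + (fun x => moll j g x - g x)
      + (fun x => g x - f x) := by
    ext x
    simp only [Pi.add_apply, moll_sub j hf hgl]
    abel
  have hfgl : LocallyIntegrable (fun y => f y - g y) volume := hf.sub hgl
  have m1 : AEStronglyMeasurable (moll j (fun y => f y - g y)) m :=
    (moll_contDiff j hfgl).continuous.aestronglyMeasurable
  have m2 : AEStronglyMeasurable (fun x => moll j g x - g x) m :=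
    ((moll_contDiff j hgl).continuous.sub hg).aestronglyMeasurable
  have m3 : AEStronglyMeasurable (fun x => g x - f x) m :=
    hg.aestronglyMeasurable.sub hf2.aestronglyMeasurable
  rw [e1]
  refine (eLpNorm_add_le (m1.add m2) m3 (by norm_num)).trans ?_
  refine le_trans (add_le_add_left (eLpNorm_add_le m1 m2 (by norm_num)) _) (le_trans ?_ hη2)
  gcongr
  · refine (hbd j _ hfgl.aestronglyMeasurable).trans ?_
    gcongr
    exact hfg
  · exact hN j hj
  · have : (fun x => g x - f x) = -(f - g) := by ext x; simp
    rw [this, eLpNorm_neg]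
    exact hfg
end

end S9

namespace S9
open scoped Convolution
variable {n : ℕ} {d C₀ : ℝ} {Γ : Set (Euc n)}

lemma ig (f : Euc n → ℝ) (x e : Euc n) : inner ℝ e (gradient f x) = fderiv ℝ f x e := by
  rw [real_inner_comm, inner_gradient_left]

lemma grad_norm (f : Euc n → ℝ) (x : Euc n) : ‖gradient f x‖ = ‖fderiv ℝ f x‖ := by
  unfold gradient; simp

lemma grad_cont {f : Euc n → ℝ} (hf : ContDiff ℝ 1 f) : Continuous (gradient f) := by
  unfold gradient
  exact (LinearIsometryEquiv.continuous _).comp (hf.continuous_fderiv one_ne_zero)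

lemma grad_cs {f : Euc n → ℝ} (hf : HasCompactSupport f) : HasCompactSupport (gradient f) := by
  have := (hf.fderiv ℝ).comp_left (g := (InnerProductSpace.toDual ℝ (Euc n)).symm) (map_zero _)
  exact this

lemma grad_zero {f : Euc n → ℝ} {x : Euc n} (hx : x ∉ tsupport f) : gradient f x = 0 := by
  unfold gradient
  rw [fderiv_of_notMem_tsupport ℝ hx]; simp

lemma grad_mul {f g : Euc n → ℝ} {x : Euc n} (hf : DifferentiableAt ℝ f x) (hg : DifferentiableAt ℝ g x) :
    gradient (fun y => f y * g y) x = f x • gradient g x + g x • gradient f x := by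
  refine ext_inner_left ℝ fun e => ?_
  rw [ig, inner_add_right, inner_smul_right, inner_smul_right, ig, ig, fderiv_fun_mul hf hg]
  simp

lemma grad_comp {f : Euc n → ℝ} {g : ℝ → ℝ} {g' : ℝ} {x : Euc n} (hf : DifferentiableAt ℝ f x)
    (hg : HasDerivAt g g' (f x)) :
    gradient (fun y => g (f y)) x = g' • gradient f x := by
  refine ext_inner_left ℝ fun e => ?_
  have := (hg.comp_hasFDerivAt x hf.hasFDerivAt).fderiv
  rw [ig, inner_smul_right, ig]
  have h2 : fderiv ℝ (fun y => g (f y)) x = g' • fderiv ℝ f x := this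
  rw [h2]; simp

lemma ibp {g φ : Euc n → ℝ} (hg : ContDiff ℝ 1 g) (hφ : ContDiff ℝ 1 φ) (hc : HasCompactSupport φ) :
    ∫ x, g x • gradient φ x = - ∫ x, φ x • gradient g x := by
  have i1 : Integrable (fun x => g x • gradient φ x) := by
    apply (hg.continuous.smul (grad_cont hφ)).integrable_of_hasCompactSupport
    exact (grad_cs hc).smul_left
  have i2 : Integrable (fun x => φ x • gradient g x) := by
    apply (hφ.continuous.smul (grad_cont hg)).integrable_of_hasCompactSupport
    exact hc.smul_right
  refine ext_inner_left ℝ fun e => ?_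
  rw [inner_neg_right, ← integral_inner i1, ← integral_inner i2]
  simp only [inner_smul_right, ig]
  rw [integral_mul_fderiv_eq_neg_fderiv_mul_of_integrable]
  · simp_rw [mul_comm]
  · have := i2.const_inner (𝕜 := ℝ) e
    simp only [inner_smul_right, ig] at this
    simpa only [mul_comm] using this
  · have := i1.const_inner (𝕜 := ℝ) e
    simpa only [inner_smul_right, ig] using this
  · apply (hg.continuous.mul hφ.continuous).integrable_of_hasCompactSupport
    exact hc.mul_left
  · exact fun x _ => (hg.differentiable one_ne_zero).differentiableAt
  · exact fun x _ => (hφ.differentiable one_ne_zero).differentiableAt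

lemma moll_grad (j : ℕ) {u : Euc n → ℝ} {v : Euc n → Euc n} {E : Set (Euc n)} 
    (hu : LocallyIntegrable u volume) (hv : LocallyIntegrable v volume) (h : IsDistribGradOn u v E)
    {x : Euc n} (hx : closedBall x (eps j) ⊆ E) :
    gradient (moll j u) x = moll j v x := by
  set φ : Euc n → ℝ := fun y => rho n j (x - y) with hφ
  have c1 : ContDiff ℝ (⊤ : ℕ∞) φ := (rho_contDiff j).comp (contDiff_const.sub contDiff_id)
  have c2 : HasCompactSupport φ := (rho_cs j).comp_homeomorph (Homeomorph.subLeft x)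
  have c3 : tsupport φ ⊆ closedBall x (eps j) := by
    apply closure_minimal _ isClosed_closedBall
    intro y hy
    by_contra hn
    apply hy
    apply rho_zero
    simp only [mem_closedBall, not_le] at hn
    simp only [mem_ball, dist_zero_right, not_lt, ← dist_eq_norm]
    rw [dist_comm]; exact hn.le
  have c4 : ∀ y, gradient φ y = - gradient (rho n j) (x - y) := by
    intro y
    refine ext_inner_left ℝ fun e => ?_
    rw [inner_neg_right, ig, ig, hφ]
    have h1 : HasFDerivAt (rho n j) (fderiv ℝ (rho n j) (x - y)) (x - y) :=
      (((rho_contDiff j).differentiable (by simp)) (x - y)).hasFDerivAt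
    have h2 := h1.comp y ((hasFDerivAt_id (𝕜 := ℝ) y).const_sub x)
    have h3 : fderiv ℝ (fun y => rho n j (x - y)) y = _ := h2.fderiv
    rw [h3]
    simp
  have c1' : ContDiff ℝ 1 φ := c1.of_le (by exact_mod_cast le_top)
  have i1 : Integrable (fun y => u y • gradient φ y) :=
    hu.integrable_smul_right_of_hasCompactSupport (grad_cont c1') (grad_cs c2)
  have key := h φ c1 c2 (c3.trans hx)
  rw [setIntegral_eq_integral_of_forall_compl_eq_zero, setIntegral_eq_integral_of_forall_compl_eq_zero] at key
  rotate_left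
  · intro y hy
    rw [image_eq_zero_of_notMem_tsupport (fun h => hy (hx (c3 h))), zero_smul]
  · intro y hy
    rw [grad_zero (fun h => hy (hx (c3 h))), smul_zero]
  rw [moll_eq]
  have key2 : ∫ y, rho n j (x - y) • v y = - ∫ y, u y • gradient φ y := by rw [key, neg_neg]
  rw [key2]
  refine ext_inner_left ℝ fun e => ?_
  rw [ig, inner_neg_right, ← integral_inner i1]
  have hd := (rho_cs j).hasFDerivAt_convolution_left (ContinuousLinearMap.lsmul ℝ ℝ)
    ((rho_contDiff (n := n) j).of_le (by exact_mod_cast le_top)) hu x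
  have hd2 := hd.fderiv
  have : fderiv ℝ (moll j u) x = (fderiv ℝ (rho n j) ⋆[(ContinuousLinearMap.lsmul ℝ ℝ : ℝ →L[ℝ] ℝ →L[ℝ] ℝ).precompL (Euc n), volume] u) x := hd2
  rw [this, convolution_eq_swap, ContinuousLinearMap.integral_apply]
  · rw [← integral_neg]
    congr 1; ext y
    rw [inner_smul_right, c4, inner_neg_right, ig]
    simp [ContinuousLinearMap.precompL_apply, mul_comm]
  · have : ConvolutionExistsAt (fderiv ℝ (rho n j)) u x ((ContinuousLinearMap.lsmul ℝ ℝ : ℝ →L[ℝ] ℝ →L[ℝ] ℝ).precompL (Euc n)) volume :=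
      ((rho_cs j).fderiv ℝ).convolutionExists_left _ ((rho_contDiff j).continuous_fderiv (by simp)) hu x
    exact this.integrable_swap

end S9

namespace S9
variable {n : ℕ} {d C₀ : ℝ} {Γ : Set (Euc n)}

lemma Hyp.L1_of_L2 (H : Hyp n d C₀ Γ) {F : Type*} [NormedAddCommGroup F] [NormedSpace ℝ F] [CompleteSpace F] {K : Set (Euc n)} (hK : IsCompact K) :
    ∃ A : ℝ≥0∞, A ≠ ⊤ ∧ ∀ f : Euc n → F, AEStronglyMeasurable f volume →
      ∫⁻ x in K, ‖f x‖ₑ ≤ A * eLpNorm f 2 (measW n d Γ) := by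
  have := H.locfin
  obtain ⟨D, hD⟩ := (hK.image (continuous_infDist_pt Γ)).bddAbove
  refine ⟨ENNReal.ofReal (D ^ ((n:ℝ) - 1 - d)) * (measW n d Γ K) ^ (1/2 : ℝ), ?_, fun f hf => ?_⟩
  · apply ENNReal.mul_ne_top (by simp)
    apply ENNReal.rpow_ne_top_of_nonneg (by norm_num) hK.measure_lt_top.ne
  · refine (H.lint_le _ K hK.measurableSet D (fun x hx => hD (mem_image_of_mem _ hx))).trans ?_
    rw [mul_assoc]
    gcongr
    rw [eLp_sq, ← ENNReal.mul_rpow_of_nonneg _ _ (by norm_num)]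
    have h1 := sq_lint ((measW n d Γ).restrict K) (g := fun x => ‖f x‖ₑ)
      ((hf.mono_ac measW_ac).restrict.enorm)
    rw [Measure.restrict_apply_univ] at h1
    have h2 : (∫⁻ x in K, ‖f x‖ₑ ∂(measW n d Γ)) = ((∫⁻ x in K, ‖f x‖ₑ ∂(measW n d Γ)) ^ 2) ^ (1/2 : ℝ) := by
      rw [← ENNReal.rpow_natCast, ← ENNReal.rpow_mul]; norm_num
    rw [h2]
    gcongr
    refine h1.trans ?_
    gcongr
    exact Measure.restrict_le_self

lemma Hyp.loc_of_L2 (H : Hyp n d C₀ Γ) {F : Type*} [NormedAddCommGroup F] [NormedSpace ℝ F] [CompleteSpace F] {f : Euc n → F}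
    (hf : AEStronglyMeasurable f volume) (h2 : MemLp f 2 (measW n d Γ)) : LocallyIntegrable f volume := by
  rw [locallyIntegrable_iff]
  intro K hK
  obtain ⟨A, hA, h⟩ := H.L1_of_L2 (F := F) hK
  refine ⟨hf.restrict, ?_⟩
  rw [hasFiniteIntegral_iff_enorm]
  exact (h f hf).trans_lt (ENNReal.mul_lt_top hA.lt_top h2.2)

lemma set_to_all {u : Euc n → ℝ} {v : Euc n → Euc n} {E : Set (Euc n)} {φ : Euc n → ℝ}
    (hs : tsupport φ ⊆ E) : (∫ x in E, u x • gradient φ x = ∫ x, u x • gradient φ x) ∧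
      (∫ x in E, φ x • v x = ∫ x, φ x • v x) := by
  constructor
  · apply setIntegral_eq_integral_of_forall_compl_eq_zero
    intro y hy
    rw [grad_zero (fun h => hy (hs h)), smul_zero]
  · apply setIntegral_eq_integral_of_forall_compl_eq_zero
    intro y hy
    rw [image_eq_zero_of_notMem_tsupport (fun h => hy (hs h)), zero_smul]

lemma Hyp.chain (H : Hyp n d C₀ Γ) {F F' : ℝ → ℝ} {B : ℝ} (hF : ContDiff ℝ 1 F) 
    (hFd : ∀ t, HasDerivAt F (F' t) t) (hF' : Continuous F')
    (hB : ∀ t, |F t| ≤ B) (hB' : ∀ t, |F' t| ≤ 1) {u : Euc n → ℝ} {v : Euc n → Euc n}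
    (hu : LocallyIntegrable u volume) (hv : LocallyIntegrable v volume) (h : IsDistribGradOn u v Γᶜ)
    (hv2 : MemLp v 2 (measW n d Γ)) :
    IsDistribGradOn (fun x => F (u x)) (fun x => F' (u x) • v x) Γᶜ := by
  intro φ hφ hc hs
  rw [(set_to_all (v := v) hs).1, (set_to_all (u := u) hs).2]
  have hφ1 : ContDiff ℝ 1 φ := hφ.of_le (by exact_mod_cast le_top)
  have hK : IsCompact (tsupport φ) := hc
  obtain ⟨e, he, hes⟩ := hK.exists_cthickening_subset_open H.hcl.isOpen_compl hs
  have hms : ∀ j, AEStronglyMeasurable (moll j u) volume := fun j => (moll_contDiff j hu).continuous.aestronglyMeasurable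
  have hmv : ∀ j, AEStronglyMeasurable (moll j v) volume := fun j => (moll_contDiff j hv).continuous.aestronglyMeasurable
  -- left side
  have L : Tendsto (fun j => ∫ x, F (moll j u x) • gradient φ x) atTop (𝓝 (∫ x, F (u x) • gradient φ x)) := by
    apply tendsto_integral_of_dominated_convergence (fun x => B * ‖gradient φ x‖)
    · intro j
      exact (hF.continuous.comp_aestronglyMeasurable (hms j)).smul (grad_cont hφ1).aestronglyMeasurable
    · exact ((grad_cont hφ1).integrable_of_hasCompactSupport (grad_cs hc)).norm.const_mul B
    · intro j
      filter_upwards with x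
      rw [norm_smul]
      gcongr
      exact hB _
    · filter_upwards [moll_ae hu] with x hx
      exact ((hF.continuous.tendsto _).comp hx).smul_const _
  have R1 : Tendsto (fun j => ∫ x, φ x • F' (moll j u x) • v x) atTop (𝓝 (∫ x, φ x • F' (u x) • v x)) := by
    apply tendsto_integral_of_dominated_convergence (fun x => ‖φ x • v x‖)
    · intro j
      exact hφ.continuous.aestronglyMeasurable.smul ((hF'.comp_aestronglyMeasurable (hms j)).smul hv.aestronglyMeasurable)
    · exact (hv.integrable_smul_left_of_hasCompactSupport hφ.continuous hc).norm
    · intro j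
      filter_upwards with x
      rw [norm_smul, norm_smul, norm_smul]
      gcongr
      have := hB' (moll j u x)
      rw [← Real.norm_eq_abs] at this
      nlinarith [norm_nonneg (v x)]
    · filter_upwards [moll_ae hu] with x hx
      exact (((hF'.tendsto _).comp hx).smul_const _).const_smul _
  have R2 : Tendsto (fun j => ∫ x, φ x • F' (moll j u x) • (moll j v x - v x)) atTop (𝓝 0) := by
    obtain ⟨A, hA, hAb⟩ := H.L1_of_L2 (F := Euc n) hK
    obtain ⟨M, hM⟩ := hc.exists_bound_of_continuous hφ.continuous
    have T := H.moll_L2 hv hv2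
    have T2 : Tendsto (fun j => ENNReal.ofReal M * (A * eLpNorm (fun x => moll j v x - v x) 2 (measW n d Γ))) atTop (𝓝 0) := by
      have := ENNReal.Tendsto.const_mul (a := A) T (Or.inr hA)
      have := ENNReal.Tendsto.const_mul (a := ENNReal.ofReal M) this (Or.inr (by simp))
      simpa using this
    rw [tendsto_zero_iff_enorm_tendsto_zero]
    refine tendsto_of_tendsto_of_tendsto_of_le_of_le tendsto_const_nhds T2 (fun _ => zero_le) (fun j => ?_)
    refine (enorm_integral_le_lintegral_enorm _).trans ?_
    have := hAb (fun x => moll j v x - v x) ((hmv j).sub hv.aestronglyMeasurable)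
    refine le_trans ?_ (mul_le_mul_right this _)
    rw [← lintegral_const_mul' _ _ (by simp), ← lintegral_indicator hK.measurableSet]
    apply lintegral_mono
    intro x
    by_cases hx : x ∈ tsupport φ
    · simp only [indicator_of_mem hx, enorm_smul]
      rw [← mul_assoc]
      gcongr
      have h1 : ‖φ x‖ₑ ≤ ENNReal.ofReal M := by
        rw [← ofReal_norm]; exact ENNReal.ofReal_le_ofReal (hM x)
      have h2 : ‖F' (moll j u x)‖ₑ ≤ 1 := by
        rw [← ofReal_norm, ← ENNReal.ofReal_one]; exact ENNReal.ofReal_le_ofReal (hB' _)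
      calc _ ≤ ENNReal.ofReal M * 1 := by gcongr
        _ = _ := mul_one _
    · simp [indicator_of_notMem hx, image_eq_zero_of_notMem_tsupport hx]
  have E1 : ∀ᶠ j in atTop, ∫ x, F (moll j u x) • gradient φ x = 
      - ((∫ x, φ x • F' (moll j u x) • (moll j v x - v x)) + ∫ x, φ x • F' (moll j u x) • v x) := by
    filter_upwards [eps_tendsto.eventually (gt_mem_nhds he)] with j hj
    have g1 : ContDiff ℝ 1 (moll j u) := (moll_contDiff j hu).of_le (by exact_mod_cast le_top)
    have ib := ibp (hF.comp g1) hφ1 hc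
    simp only [Function.comp_apply] at ib
    rw [ib, ← integral_add]
    · congr 1
      apply integral_congr_ae
      filter_upwards with x
      by_cases hx : x ∈ tsupport φ
      · show φ x • gradient (fun y => F (moll j u y)) x = _
        rw [grad_comp (g1.differentiable one_ne_zero x) (hFd _), moll_grad j hu hv h]
        · rw [← smul_add, ← smul_add]; simp
        · refine Subset.trans ?_ hes
          refine (closedBall_subset_cthickening hx _).trans (cthickening_mono hj.le _)
      · rw [image_eq_zero_of_notMem_tsupport hx]; simp
    · have c : Continuous (fun x => φ x * F' (moll j u x)) := hφ.continuous.mul (hF'.comp g1.continuous)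
      have := ((moll_contDiff j hv).continuous.locallyIntegrable (μ := volume)).sub hv
      have := this.integrable_smul_left_of_hasCompactSupport c hc.mul_right
      simpa [mul_smul] using this
    · have c : Continuous (fun x => φ x * F' (moll j u x)) := hφ.continuous.mul (hF'.comp g1.continuous)
      have := hv.integrable_smul_left_of_hasCompactSupport c hc.mul_right
      simpa [mul_smul] using this
  have R := (R2.add R1).neg
  rw [zero_add] at R
  exact tendsto_nhds_unique (L.congr' E1) R

end S9

namespace S9
variable {n : ℕ} {d C₀ : ℝ} {Γ : Set (Euc n)}

/-- rough cutoff -/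
def gcut (Γ : Set (Euc n)) (j : ℕ) (x : Euc n) : ℝ := min 1 (max 0 (infDist x Γ / eps j - 2))

lemma gcut_lip (j : ℕ) (x y : Euc n) : |gcut Γ j x - gcut Γ j y| ≤ 1 / eps j * dist x y := by
  unfold gcut
  have h1 : |min 1 (max 0 (infDist x Γ / eps j - 2)) - min 1 (max 0 (infDist y Γ / eps j - 2))| ≤
      |(infDist x Γ / eps j - 2) - (infDist y Γ / eps j - 2)| := by
    refine (abs_min_sub_min_le_max _ _ _ _).trans ?_
    rw [sub_self, abs_zero]
    refine max_le (abs_nonneg _) ?_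
    refine (abs_max_sub_max_le_max _ _ _ _).trans ?_
    rw [sub_self, abs_zero]
    exact max_le (abs_nonneg _) le_rfl
  refine h1.trans ?_
  have h2 : infDist x Γ / eps j - 2 - (infDist y Γ / eps j - 2) = 1 / eps j * (infDist x Γ - infDist y Γ) := by ring
  rw [h2, abs_mul, abs_of_pos (one_div_pos.2 (eps_pos j))]
  have h3 := (lipschitz_infDist_pt Γ).dist_le_mul x y
  rw [Real.dist_eq] at h3
  have := one_div_pos.2 (eps_pos j)
  gcongr
  simpa using h3

lemma gcut_cont (j : ℕ) : Continuous (gcut Γ j) := by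
  unfold gcut
  have := continuous_infDist_pt Γ
  fun_prop

lemma gcut_norm (j : ℕ) (x : Euc n) : ‖gcut Γ j x‖ ≤ 1 := by
  unfold gcut
  rw [Real.norm_eq_abs, abs_of_nonneg (le_min zero_le_one (le_max_left _ _))]
  exact min_le_left _ _

/-- smooth cutoff -/
def chi (Γ : Set (Euc n)) (j : ℕ) : Euc n → ℝ := moll j (gcut Γ j)

lemma chi_smooth (j : ℕ) : ContDiff ℝ (⊤ : ℕ∞) (chi Γ j) := moll_contDiff j (gcut_cont j).locallyIntegrable

lemma chi_norm (j : ℕ) (x : Euc n) : ‖chi Γ j x‖ ≤ 1 := moll_norm_le j (gcut_norm j) x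

lemma infd (x y : Euc n) : infDist x Γ ≤ infDist y Γ + dist x y := infDist_le_infDist_add_dist

lemma chi_zero (j : ℕ) {x : Euc n} (hx : infDist x Γ ≤ eps j) : chi Γ j x = 0 := by
  have he := eps_pos j
  have h0 : ∀ y ∈ ball x (eps j), gcut Γ j y = 0 := by
    intro y hy
    unfold gcut
    have h1 := infd (Γ := Γ) y x
    rw [mem_ball] at hy
    have : infDist y Γ / eps j ≤ 2 := by rw [div_le_iff₀ he]; linarith
    rw [max_eq_left (by linarith)]; simp
  unfold chi
  rw [moll_const j (fun y hy => by rw [h0 y hy, h0 x (mem_ball_self he)]), h0 x (mem_ball_self he)]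

lemma chi_one (j : ℕ) {x : Euc n} (hx : 4 * eps j ≤ infDist x Γ) : chi Γ j x = 1 := by
  have he := eps_pos j
  have h0 : ∀ y ∈ ball x (eps j), gcut Γ j y = 1 := by
    intro y hy
    unfold gcut
    have h1 := infd (Γ := Γ) x y
    rw [mem_ball, dist_comm] at hy
    have : 3 ≤ infDist y Γ / eps j := by rw [le_div_iff₀ he]; linarith
    apply min_eq_left
    exact le_trans (by linarith) (le_max_right _ _)
  unfold chi
  rw [moll_const j (fun y hy => by rw [h0 y hy, h0 x (mem_ball_self he)]), h0 x (mem_ball_self he)]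

lemma chi_grad_zero (j : ℕ) {x : Euc n} (hx : 4 * eps j < infDist x Γ) : gradient (chi Γ j) x = 0 := by
  have : chi Γ j =ᶠ[𝓝 x] fun _ => 1 := by
    have := (continuous_infDist_pt Γ).tendsto x
    filter_upwards [this.eventually (lt_mem_nhds hx)] with y hy
    exact chi_one j hy.le
  unfold gradient
  rw [this.fderiv_eq]; simp

lemma moll_trans (j : ℕ) (f : Euc n → ℝ) (x h : Euc n) : moll j (fun y => f (y + h)) x = moll j f (x + h) := by
  unfold moll
  rw [convolution_def, convolution_def]
  congr 1; ext t
  congr 2; abel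

lemma chi_grad (j : ℕ) (x : Euc n) : ‖gradient (chi Γ j) x‖ ≤ 1 / eps j := by
  have he := one_div_pos.2 (eps_pos j)
  rw [grad_norm]
  have L : LipschitzWith ⟨1 / eps j, he.le⟩ (chi Γ j) := by
    apply LipschitzWith.of_dist_le_mul
    intro x y
    show _ ≤ 1 / eps j * dist x y
    have h1 := moll_trans j (gcut Γ j) y (x - y)
    rw [add_sub_cancel] at h1
    unfold chi
    have hl : LocallyIntegrable (gcut Γ j) volume := (gcut_cont j).locallyIntegrable
    have hl2 : LocallyIntegrable (fun z => gcut Γ j (z + (x - y))) volume := 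
      ((gcut_cont j).comp (continuous_id.add continuous_const)).locallyIntegrable
    rw [← h1, dist_eq_norm, ← moll_sub j hl2 hl]
    apply moll_norm_le
    intro z
    refine (gcut_lip j _ _).trans (le_of_eq ?_)
    simp [dist_eq_norm]
  exact norm_fderiv_le_of_lipschitz ℝ L

lemma Hyp.chi_tendsto (H : Hyp n d C₀ Γ) : ∀ᵐ x, Tendsto (fun j => chi Γ j x) atTop (𝓝 1) := by
  have h0 : ∀ᵐ x ∂(volume : Measure (Euc n)), x ∉ Γ := by
    rw [ae_iff]; simpa using H.null
  filter_upwards [h0] with x hx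
  have htpos : 0 < infDist x Γ := (H.hcl.notMem_iff_infDist_pos H.hne).1 hx
  apply tendsto_const_nhds.congr'
  filter_upwards [eps_tendsto.eventually (gt_mem_nhds (show 0 < infDist x Γ / 4 by positivity))] with j hj
  rw [chi_one]; linarith

lemma Hyp.remov (H : Hyp n d C₀ Γ) {b : Euc n → ℝ} {V : Euc n → Euc n} {B : ℝ} (hB : ∀ x, ‖b x‖ ≤ B)
    (hb : AEStronglyMeasurable b volume) (hV : LocallyIntegrable V volume) (h : IsDistribGradOn b V Γᶜ) :
    IsDistribGradOn b V univ := by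
  intro φ hφ hc _
  simp only [Measure.restrict_univ]
  have hφ1 : ContDiff ℝ 1 φ := hφ.of_le (by exact_mod_cast le_top)
  have hB0 : 0 ≤ B := (norm_nonneg _).trans (hB 0)
  have cs1 : ∀ j, ContDiff ℝ 1 (chi Γ j) := fun j => (chi_smooth j).of_le (by exact_mod_cast le_top)
  have iG : Integrable (gradient φ) volume := (grad_cont hφ1).integrable_of_hasCompactSupport (grad_cs hc)
  have L : Tendsto (fun j => ∫ x, b x • chi Γ j x • gradient φ x) atTop (𝓝 (∫ x, b x • gradient φ x)) := by
    apply tendsto_integral_of_dominated_convergence (fun x => B * ‖gradient φ x‖)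
    · intro j
      exact hb.smul ((cs1 j).continuous.aestronglyMeasurable.smul (grad_cont hφ1).aestronglyMeasurable)
    · exact iG.norm.const_mul B
    · intro j
      filter_upwards with x
      rw [norm_smul, norm_smul]
      gcongr
      · exact hB x
      · exact mul_le_of_le_one_left (norm_nonneg _) (chi_norm j x)
    · filter_upwards [H.chi_tendsto] with x hx
      have := (hx.smul_const (gradient φ x)).const_smul (b x)
      simpa using this
  have iV : Integrable (fun x => φ x • V x) volume := hV.integrable_smul_left_of_hasCompactSupport hφ.continuous hc
  have R : Tendsto (fun j => ∫ x, (φ x * chi Γ j x) • V x) atTop (𝓝 (∫ x, φ x • V x)) := by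
    apply tendsto_integral_of_dominated_convergence (fun x => ‖φ x • V x‖)
    · intro j
      exact (hφ.continuous.mul (cs1 j).continuous).aestronglyMeasurable.smul hV.aestronglyMeasurable
    · exact iV.norm
    · intro j
      filter_upwards with x
      rw [norm_smul, norm_smul, norm_mul]
      gcongr
      exact mul_le_of_le_one_right (norm_nonneg _) (chi_norm j x)
    · filter_upwards [H.chi_tendsto] with x hx
      have := (hx.const_mul (φ x)).smul_const (V x)
      simpa using this
  have iM : ∀ j, Integrable (fun x => b x • φ x • gradient (chi Γ j) x) volume := by
    intro j
    have : Integrable (fun x => φ x • gradient (chi Γ j) x) volume := 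
      (hφ.continuous.smul (grad_cont (cs1 j))).integrable_of_hasCompactSupport hc.smul_right
    exact this.bdd_smul B hb (ae_of_all _ hB)
  have M : Tendsto (fun j => ∫ x, b x • φ x • gradient (chi Γ j) x) atTop (𝓝 0) := by
    obtain ⟨M, hM⟩ := hc.exists_bound_of_continuous hφ.continuous
    have hM0 : 0 ≤ M := (norm_nonneg _).trans (hM 0)
    obtain ⟨R, hR0, hR⟩ : ∃ R : ℝ, 0 < R ∧ tsupport φ ⊆ ball 0 R := by
      obtain ⟨R, hR⟩ := hc.isCompact.isBounded.subset_ball (0 : Euc n)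
      exact ⟨max R 1, by positivity, hR.trans (ball_subset_ball (le_max_left _ _))⟩
    obtain ⟨C, hC, hst⟩ := H.strip
    have ha : 0 < (n:ℝ) - 1 - d := by linarith [H.hdn]
    set a := (n:ℝ) - 1 - d with hadef
    have T : Tendsto (fun j => ENNReal.ofReal (B * M * 5 * C * (R + 10) ^ d * (5 * eps j) ^ a)) atTop (𝓝 0) := by
      rw [← ENNReal.ofReal_zero]
      apply ENNReal.tendsto_ofReal
      have h1 : Tendsto (fun j => 5 * eps j) atTop (𝓝 0) := by simpa using eps_tendsto.const_mul 5
      have h2 := h1.rpow_const (p := a) (Or.inr ha.le)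
      rw [Real.zero_rpow ha.ne'] at h2
      simpa using h2.const_mul (B * M * 5 * C * (R + 10) ^ d)
    rw [tendsto_zero_iff_enorm_tendsto_zero]
    refine tendsto_of_tendsto_of_tendsto_of_le_of_le tendsto_const_nhds T (fun _ => zero_le) (fun j => ?_)
    refine (enorm_integral_le_lintegral_enorm _).trans ?_
    have he := eps_pos j
    set S := ball (0 : Euc n) R ∩ {x | infDist x Γ < 5 * eps j} with hS
    have hSm : MeasurableSet S := measurableSet_ball.inter (infDist_meas measurableSet_Iio)
    have hv : volume S ≤ ENNReal.ofReal ((5 * eps j) ^ a * (C * (5 * eps j) * (R + 10) ^ d)) := by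
      have h1 := H.lint_le (fun _ => 1) S hSm (5 * eps j) (fun x hx => hx.2.le)
      simp only [setLIntegral_one] at h1
      refine h1.trans ?_
      rw [ENNReal.ofReal_mul (by positivity)]
      gcongr
      refine (hst 0 R _ hR0 (by positivity)).trans ?_
      apply ENNReal.ofReal_le_ofReal
      have := H.hd0
      have := eps_le_one j
      gcongr
      linarith
    calc ∫⁻ x, ‖b x • φ x • gradient (chi Γ j) x‖ₑ ≤ ∫⁻ x, S.indicator (fun _ => ENNReal.ofReal (B * (M * (1 / eps j)))) x := by
          apply lintegral_mono
          intro x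
          by_cases hx : x ∈ S
          · simp only [indicator_of_mem hx]
            rw [← ofReal_norm]
            apply ENNReal.ofReal_le_ofReal
            rw [norm_smul, norm_smul]
            gcongr
            · exact hB x
            · exact hM x
            · exact chi_grad j x
          · simp only [indicator_of_notMem hx]
            by_cases hx2 : x ∈ ball (0 : Euc n) R
            · have : ¬ infDist x Γ < 5 * eps j := fun h => hx ⟨hx2, h⟩
              rw [chi_grad_zero j (by linarith)]; simp
            · rw [image_eq_zero_of_notMem_tsupport (fun h => hx2 (hR h))]; simp
      _ = ENNReal.ofReal (B * (M * (1 / eps j))) * volume S := by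
          rw [lintegral_indicator hSm, setLIntegral_const]
      _ ≤ ENNReal.ofReal (B * (M * (1 / eps j))) * ENNReal.ofReal ((5 * eps j) ^ a * (C * (5 * eps j) * (R + 10) ^ d)) := by
          gcongr
      _ = _ := by
          rw [← ENNReal.ofReal_mul (by positivity)]
          congr 1
          field_simp
  have E1 : ∀ j, (∫ x, b x • chi Γ j x • gradient φ x) + ∫ x, b x • φ x • gradient (chi Γ j) x = 
      - ∫ x, (φ x * chi Γ j x) • V x := by
    intro j
    have hs : tsupport (fun x => φ x * chi Γ j x) ⊆ Γᶜ := by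
      have : tsupport (fun x => φ x * chi Γ j x) ⊆ {x | eps j ≤ infDist x Γ} := by
        apply closure_minimal _ (isClosed_le continuous_const (continuous_infDist_pt Γ))
        intro x hx
        by_contra hn
        rw [mem_ofPred_eq, not_le] at hn
        apply hx
        simp only [chi_zero j hn.le, mul_zero]
      refine this.trans fun x hx hxΓ => ?_
      have h2 := infDist_zero_of_mem hxΓ
      have : eps j ≤ infDist x Γ := hx
      linarith [eps_pos j]
    have := h (fun x => φ x * chi Γ j x) (hφ.mul (chi_smooth j)) hc.mul_right hs
    rw [(set_to_all (v := V) hs).1, (set_to_all (u := b) hs).2] at this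
    rw [← this, ← integral_add]
    · congr 1; ext1 x
      rw [grad_mul (hφ1.differentiable one_ne_zero x) ((cs1 j).differentiable one_ne_zero x), ← smul_add, add_comm]
    · have : Integrable (fun x => chi Γ j x • gradient φ x) volume := 
        ((cs1 j).continuous.smul (grad_cont hφ1)).integrable_of_hasCompactSupport (grad_cs hc).smul_left
      exact this.bdd_smul B hb (ae_of_all _ hB)
    · exact iM j
  have := L.add M
  rw [add_zero] at this
  exact tendsto_nhds_unique this ((R.neg).congr (fun j => (E1 j).symm))

end S9

namespace S9
variable {n : ℕ} {d C₀ : ℝ} {Γ : Set (Euc n)}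

lemma sum_sq_single {ι : Type*} (s : Finset ι) (g : ι → ℝ≥0∞) 
    (h : ∀ i ∈ s, ∀ j ∈ s, g i ≠ 0 → g j ≠ 0 → i = j) : (∑ i ∈ s, g i) ^ 2 ≤ ∑ i ∈ s, g i ^ 2 := by
  by_cases h0 : ∃ i ∈ s, g i ≠ 0
  · obtain ⟨i, hi, hg⟩ := h0
    rw [Finset.sum_eq_single i]
    · exact Finset.single_le_sum (f := fun i => g i ^ 2) (fun _ _ => zero_le) hi
    · intro j hj hji
      by_contra hh
      exact hji (h j hj i hi hh hg)
    · exact fun hh => (hh hi).elim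
  · push Not at h0
    rw [Finset.sum_eq_zero h0]; simp

lemma bump0 (n : ℕ) : ∃ (f : Euc n → ℝ) (M : ℝ), 0 ≤ M ∧ ContDiff ℝ (⊤ : ℕ∞) f ∧ (∀ x, 0 ≤ f x ∧ f x ≤ 1) ∧
    (∀ x, ‖x‖ ≤ 1 → f x = 1) ∧ (∀ x, 2 ≤ ‖x‖ → f x = 0) ∧ (∀ x, ‖fderiv ℝ f x‖ ≤ M) ∧
    (∀ x, fderiv ℝ f x ≠ 0 → 1 ≤ ‖x‖ ∧ ‖x‖ ≤ 2) := by
  let b : ContDiffBump (0 : Euc n) := ⟨1, 2, one_pos, one_lt_two⟩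
  have hs : ContDiff ℝ (⊤ : ℕ∞) b := b.contDiff
  obtain ⟨M, hM⟩ := (b.hasCompactSupport.fderiv ℝ).exists_bound_of_continuous (hs.continuous_fderiv (by simp))
  refine ⟨b, M, (norm_nonneg _).trans (hM 0), hs, fun x => ⟨b.nonneg, b.le_one⟩, fun x hx => ?_, fun x hx => ?_, hM, fun x hx => ⟨?_, ?_⟩⟩
  · apply b.one_of_mem_closedBall; simpa [b] using hx
  · apply b.zero_of_le_dist; simpa [b] using hx
  · by_contra hn
    apply hx
    have : b =ᶠ[𝓝 x] fun _ => 1 := b.eventuallyEq_one_of_mem_ball (by simpa [b] using hn)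
    rw [this.fderiv_eq]; simp
  · by_contra hn
    apply hx
    apply fderiv_of_notMem_tsupport
    rw [b.tsupport_eq]
    simpa [b] using hn

lemma Hyp.cutoff (H : Hyp n d C₀ Γ) (R η : ℝ) (hR : 1 ≤ R) (hη : 0 < η) : ∃ φ : Euc n → ℝ,
    ContDiff ℝ (⊤ : ℕ∞) φ ∧ HasCompactSupport φ ∧ (∀ x, 0 ≤ φ x ∧ φ x ≤ 1) ∧ (∀ x, ‖x‖ ≤ R → φ x = 1) ∧
    ∫⁻ x, ‖gradient φ x‖ₑ ^ 2 ∂(measW n d Γ) ≤ ENNReal.ofReal η := by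
  obtain ⟨f, M, hM, f1, f2, f3, f4, f5, f6⟩ := bump0 n
  obtain ⟨C, hC, hb⟩ := H.ballm
  obtain ⟨N, hN⟩ := exists_nat_gt (9 * C * M ^ 2 / η)
  have hN0 : (0:ℝ) < N := lt_of_le_of_lt (by positivity) hN
  have hR0 : 0 < R := by linarith
  set r : ℕ → ℝ := fun j => 4 ^ j * R with hr
  have hr1 : ∀ j, 1 ≤ r j := fun j => one_le_mul_of_one_le_of_one_le (one_le_pow₀ (by norm_num)) hR
  have hr0 : ∀ j, 0 < r j := fun j => by linarith [hr1 j]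
  have hrR : ∀ j, R ≤ r j := fun j => le_mul_of_one_le_left hR0.le (one_le_pow₀ (by norm_num))
  set e : ℕ → Euc n → ℝ := fun j x => f ((r j)⁻¹ • x) with he
  have es : ∀ j, ContDiff ℝ (⊤ : ℕ∞) (e j) := fun j => f1.comp (contDiff_const_smul _)
  have nrm : ∀ j (x : Euc n), ‖(r j)⁻¹ • x‖ = ‖x‖ / r j := by
    intro j x
    rw [norm_smul, norm_inv, Real.norm_of_nonneg (hr0 j).le]; ring
  have ed : ∀ j x, fderiv ℝ (e j) x = (r j)⁻¹ • fderiv ℝ f ((r j)⁻¹ • x) := fun j x => fderiv_comp_smul _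
  set φ : Euc n → ℝ := fun x => (N:ℝ)⁻¹ * ∑ j ∈ Finset.range N, e j x with hφ
  have φs : ContDiff ℝ (⊤ : ℕ∞) φ := contDiff_const.mul (ContDiff.sum fun j _ => es j)
  have e01 : ∀ j x, 0 ≤ e j x ∧ e j x ≤ 1 := fun j x => f2 _
  refine ⟨φ, φs, ?_, fun x => ⟨?_, ?_⟩, fun x hx => ?_, ?_⟩
  · apply HasCompactSupport.of_support_subset_isCompact (isCompact_closedBall 0 (2 * r N))
    intro x hx
    by_contra hn
    apply hx
    simp only [mem_closedBall, dist_zero_right, not_le] at hn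
    simp only [hφ]
    rw [Finset.sum_eq_zero, mul_zero]
    intro j hj
    apply f4
    rw [nrm, le_div_iff₀ (hr0 j)]
    have : r j ≤ r N := by
      simp only [hr]
      gcongr
      · norm_num
      · exact (Finset.mem_range.1 hj).le
    linarith
  · exact mul_nonneg (by positivity) (Finset.sum_nonneg fun j _ => (e01 j x).1)
  · simp only [hφ]
    rw [inv_mul_le_iff₀ hN0, mul_one]
    refine (Finset.sum_le_card_nsmul _ _ 1 fun j _ => (e01 j x).2).trans ?_
    simp
  · simp only [hφ]
    rw [Finset.sum_congr rfl (g := fun _ => 1)]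
    · simp [hN0.ne']
    · intro j _
      apply f3
      rw [nrm, div_le_one (hr0 j)]
      exact hx.trans (hrR j)
  · set A : ℕ → Set (Euc n) := fun j => {x | r j ≤ ‖x‖ ∧ ‖x‖ ≤ 2 * r j} with hA
    have hAm : ∀ j, MeasurableSet (A j) := fun j => 
      (measurableSet_le measurable_const measurable_norm).inter (measurableSet_le measurable_norm measurable_const)
    set g : ℕ → Euc n → ℝ≥0∞ := fun j => (A j).indicator (fun _ => ENNReal.ofReal (M / r j)) with hg
    have key : ∀ j x, ‖fderiv ℝ (e j) x‖ₑ ≤ g j x := by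
      intro j x
      by_cases hx : x ∈ A j
      · simp only [hg, indicator_of_mem hx]
        rw [← ofReal_norm, ed, norm_smul, norm_inv, Real.norm_of_nonneg (hr0 j).le, inv_mul_eq_div]
        apply ENNReal.ofReal_le_ofReal
        have := hr0 j
        gcongr
        exact f5 _
      · have : fderiv ℝ f ((r j)⁻¹ • x) = 0 := by
          by_contra h0
          have := f6 _ h0
          rw [nrm, le_div_iff₀ (hr0 j), div_le_iff₀ (hr0 j), one_mul] at this
          exact hx this
        rw [ed, this, smul_zero, ← ofReal_norm, norm_zero]; simp
    have gm : ∀ j, Measurable (g j) := fun j => measurable_const.indicator (hAm j)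
    have pt : ∀ x, ‖gradient φ x‖ₑ ^ 2 ≤ ENNReal.ofReal ((N:ℝ)⁻¹ ^ 2) * ∑ j ∈ Finset.range N, g j x ^ 2 := by
      intro x
      have h1 : ‖gradient φ x‖ₑ = ‖fderiv ℝ φ x‖ₑ := by rw [← ofReal_norm, ← ofReal_norm, grad_norm]
      have h2 : fderiv ℝ φ x = (N:ℝ)⁻¹ • ∑ j ∈ Finset.range N, fderiv ℝ (e j) x := by
        have hd : ∀ j, DifferentiableAt ℝ (e j) x := fun j => (es j).differentiable (by simp) x
        simp only [hφ]
        rw [fderiv_const_mul, fderiv_fun_sum]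
        · exact fun j _ => hd j
        · exact DifferentiableAt.fun_sum fun j _ => hd j
      rw [h1, h2, enorm_smul, mul_pow]
      have h3 : ‖(N:ℝ)⁻¹‖ₑ ^ 2 = ENNReal.ofReal ((N:ℝ)⁻¹ ^ 2) := by
        rw [← ofReal_norm, Real.norm_of_nonneg (by positivity), ENNReal.ofReal_pow (by positivity)]
      rw [h3]
      gcongr
      refine le_trans ?_ (sum_sq_single _ _ ?_)
      · gcongr
        rw [← ofReal_norm]
        refine (ENNReal.ofReal_le_ofReal (norm_sum_le _ _)).trans ?_
        rw [ENNReal.ofReal_sum_of_nonneg fun _ _ => norm_nonneg _]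
        refine Finset.sum_le_sum fun j _ => ?_
        rw [ofReal_norm]
        exact key j x
      · have lem : ∀ i j, i < j → x ∈ A i → x ∈ A j → False := by
          intro i j hij hi hj
          have h4 : 4 * r i ≤ r j := by
            have : (4:ℝ) ^ (i+1) ≤ 4 ^ j := pow_le_pow_right₀ (by norm_num) hij
            simp only [hr]
            rw [pow_succ] at this
            nlinarith
          have := hi.2
          have := hj.1
          linarith [hr0 i]
        intro i _ j _ hi hj
        have hi' : x ∈ A i := by by_contra hh; exact hi (indicator_of_notMem hh _)
        have hj' : x ∈ A j := by by_contra hh; exact hj (indicator_of_notMem hh _)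
        rcases lt_trichotomy i j with hl | hl | hl
        · exact (lem i j hl hi' hj').elim
        · exact hl
        · exact (lem j i hl hj' hi').elim
    have ig : ∀ j, ∫⁻ x, g j x ^ 2 ∂(measW n d Γ) ≤ ENNReal.ofReal (9 * C * M ^ 2) := by
      intro j
      have hrj := hr0 j
      have h1 : ∀ x, g j x ^ 2 ≤ (ball (0 : Euc n) (3 * r j)).indicator (fun _ => ENNReal.ofReal ((M / r j)^2)) x := by
        intro x
        by_cases hx : x ∈ A j
        · have : x ∈ ball (0 : Euc n) (3 * r j) := by
            rw [mem_ball, dist_zero_right]; linarith [hx.2]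
          rw [indicator_of_mem this]
          simp only [hg, indicator_of_mem hx]
          rw [ENNReal.ofReal_pow (by positivity)]
        · simp [hg, indicator_of_notMem hx]
      refine (lintegral_mono h1).trans ?_
      rw [lintegral_indicator measurableSet_ball, setLIntegral_const]
      refine (mul_le_mul_right (hb 0 (3 * r j) (by positivity)) _).trans ?_
      rw [← ENNReal.ofReal_mul (by positivity)]
      apply ENNReal.ofReal_le_ofReal
      have h2 : (3 * r j) ^ (d + 1) ≤ (3 * r j) ^ (2:ℝ) := 
        Real.rpow_le_rpow_of_exponent_le (by linarith [hr1 j]) (by linarith [H.hd1])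
      rw [Real.rpow_two] at h2
      calc (M / r j) ^ 2 * (C * (3 * r j) ^ (d + 1)) ≤ (M / r j) ^ 2 * (C * (3 * r j) ^ 2) := by gcongr
        _ = 9 * C * M ^ 2 := by field_simp; ring
    calc ∫⁻ x, ‖gradient φ x‖ₑ ^ 2 ∂(measW n d Γ) ≤ 
        ∫⁻ x, ENNReal.ofReal ((N:ℝ)⁻¹ ^ 2) * ∑ j ∈ Finset.range N, g j x ^ 2 ∂(measW n d Γ) := lintegral_mono pt
      _ = ENNReal.ofReal ((N:ℝ)⁻¹ ^ 2) * ∑ j ∈ Finset.range N, ∫⁻ x, g j x ^ 2 ∂(measW n d Γ) := by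
        rw [lintegral_const_mul' _ _ (by simp), lintegral_finsetSum _ fun j _ => (gm j).pow_const 2]
      _ ≤ ENNReal.ofReal ((N:ℝ)⁻¹ ^ 2) * ∑ j ∈ Finset.range N, ENNReal.ofReal (9 * C * M ^ 2) := by
        gcongr with j; exact ig j
      _ = ENNReal.ofReal ((N:ℝ)⁻¹ * (9 * C * M ^ 2)) := by
        rw [Finset.sum_const, Finset.card_range, nsmul_eq_mul, ← ENNReal.ofReal_natCast, 
          ← ENNReal.ofReal_mul (by positivity), ← ENNReal.ofReal_mul (by positivity)]
        congr 1; field_simp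
      _ ≤ ENNReal.ofReal η := by
        apply ENNReal.ofReal_le_ofReal
        rw [div_lt_iff₀ hη] at hN
        rw [inv_mul_le_iff₀ hN0]
        exact hN.le

end S9

namespace S9
variable {n : ℕ} {d C₀ : ℝ} {Γ : Set (Euc n)}

/-- truncation -/
def Tr (h t : ℝ) : ℝ := t / (1 + (h * t) ^ 2)
/-- its derivative -/
def Tr' (h t : ℝ) : ℝ := (1 - (h * t) ^ 2) / (1 + (h * t) ^ 2) ^ 2

lemma Tr_den (h t : ℝ) : 0 < 1 + (h * t) ^ 2 := by positivity

lemma Tr_cd (h : ℝ) : ContDiff ℝ 1 (Tr h) := by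
  unfold Tr
  apply ContDiff.div (by fun_prop) (by fun_prop)
  exact fun t => (Tr_den h t).ne'

lemma Tr_deriv (h t : ℝ) : HasDerivAt (Tr h) (Tr' h t) t := by
  have h1 : HasDerivAt (fun t : ℝ => 1 + (h * t) ^ 2) (2 * (h * t) * h) t := by
    have := (((hasDerivAt_id t).const_mul h).pow 2).const_add 1
    simpa using this
  have := (hasDerivAt_id t).div h1 (Tr_den h t).ne'
  have e : Tr' h t = (1 * (1 + (h * t) ^ 2) - id t * (2 * (h * t) * h)) / (1 + (h * t) ^ 2) ^ 2 := by
    unfold Tr'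
    simp only [id]; ring
  rw [e]; exact this

lemma Tr'_cont (h : ℝ) : Continuous (Tr' h) := by
  unfold Tr'
  apply Continuous.div (by fun_prop) (by fun_prop)
  exact fun t => (pow_pos (Tr_den h t) 2).ne'

lemma Tr_le (h t : ℝ) : |Tr h t| ≤ |t| := by
  unfold Tr
  rw [abs_div, abs_of_pos (Tr_den h t)]
  apply div_le_self (abs_nonneg _)
  nlinarith [sq_nonneg (h * t)]

lemma Tr_bd {h : ℝ} (hh : 0 < h) (t : ℝ) : |Tr h t| ≤ 1 / h := by
  unfold Tr
  rw [abs_div, abs_of_pos (Tr_den h t), div_le_div_iff₀ (Tr_den h t) hh, one_mul]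
  rw [← sq_abs, abs_mul, abs_of_pos hh]
  nlinarith [sq_nonneg (h * |t| - 1), abs_nonneg t]

lemma Tr'_le (h t : ℝ) : |Tr' h t| ≤ 1 := by
  unfold Tr'
  have := Tr_den h t
  rw [abs_div, abs_of_pos (pow_pos this 2), div_le_one (pow_pos this 2), abs_le]
  constructor <;> nlinarith [sq_nonneg (h * t), sq_nonneg ((h * t)^2)]

lemma Tr_tendsto (t : ℝ) : Tendsto (fun k => Tr (eps k) t) atTop (𝓝 t) := by
  have : ContinuousAt (fun h => Tr h t) 0 := by
    unfold Tr
    exact ContinuousAt.div (f := fun _ => t) (g := fun h => 1 + (h * t) ^ 2) (by fun_prop) (by fun_prop) (Tr_den 0 t).ne'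
  have := this.tendsto.comp eps_tendsto
  simpa [Tr, Function.comp_def] using this

lemma Tr'_tendsto (t : ℝ) : Tendsto (fun k => Tr' (eps k) t) atTop (𝓝 1) := by
  have : ContinuousAt (fun h => Tr' h t) 0 := by
    unfold Tr'
    exact ContinuousAt.div (f := fun h => 1 - (h * t) ^ 2) (g := fun h => (1 + (h * t) ^ 2) ^ 2) (by fun_prop) (by fun_prop) (pow_pos (Tr_den 0 t) 2).ne'
  have := this.tendsto.comp eps_tendsto
  simpa [Tr', Function.comp_def] using this

lemma moll_L1 {b : Euc n → ℝ} {B : ℝ} (hb : LocallyIntegrable b volume) (hB : ∀ x, ‖b x‖ ≤ B) (R : ℝ) :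
    Tendsto (fun j => ∫⁻ x in ball (0 : Euc n) R, ‖moll j b x - b x‖ₑ) atTop (𝓝 0) := by
  have : Tendsto (fun j => ∫⁻ x in ball (0 : Euc n) R, ‖moll j b x - b x‖ₑ) atTop (𝓝 (∫⁻ x in ball (0 : Euc n) R, 0)) := by
    apply tendsto_lintegral_of_dominated_convergence' (fun _ => ENNReal.ofReal (B + B))
    · intro j
      exact (((moll_contDiff j hb).continuous.aestronglyMeasurable.sub hb.aestronglyMeasurable).enorm).restrict
    · intro j
      filter_upwards with x
      rw [← ofReal_norm]
      apply ENNReal.ofReal_le_ofReal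
      exact (norm_sub_le _ _).trans (add_le_add (moll_norm_le j hB x) (hB x))
    · rw [setLIntegral_const]
      exact ENNReal.mul_ne_top (by simp) measure_ball_lt_top.ne
    · filter_upwards [ae_restrict_of_ae (moll_ae hb)] with x hx
      have := (hx.sub_const (b x)).enorm
      simpa using this
  simpa using this

lemma Hyp.step (H : Hyp n d C₀ Γ) {u : Euc n → ℝ} {v : Euc n → Euc n} (hu : LocallyIntegrable u volume)
    (hv : AEStronglyMeasurable v volume) (hv2 : MemLp v 2 (measW n d Γ)) (h : IsDistribGradOn u v Γᶜ) (k : ℕ) :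
    ∃ (w φ : Euc n → ℝ), ContDiff ℝ (⊤ : ℕ∞) w ∧ HasCompactSupport w ∧ Continuous φ ∧ (∀ x, 0 ≤ φ x ∧ φ x ≤ 1) ∧
      (∀ x, ‖x‖ ≤ (k:ℝ) + 1 → φ x = 1) ∧
      ∫⁻ x in ball (0 : Euc n) (k + 1), ‖w x - Tr (eps k) (u x)‖ₑ ≤ ENNReal.ofReal (eps k) ∧
      eLpNorm (fun x => gradient w x - φ x • Tr' (eps k) (u x) • v x) 2 (measW n d Γ) ≤ 
        ENNReal.ofReal (eps k) + ENNReal.ofReal (eps k) := by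
  have he := eps_pos k
  have hvl := H.loc_of_L2 hv hv2
  set b : Euc n → ℝ := fun x => Tr (eps k) (u x) with hbdef
  set V : Euc n → Euc n := fun x => Tr' (eps k) (u x) • v x with hVdef
  have hbB : ∀ x, ‖b x‖ ≤ 1 / eps k := fun x => Tr_bd he _
  have hbm : AEStronglyMeasurable b volume := (Tr_cd _).continuous.comp_aestronglyMeasurable hu.aestronglyMeasurable
  have hVm : AEStronglyMeasurable V volume := ((Tr'_cont _).comp_aestronglyMeasurable hu.aestronglyMeasurable).smul hv
  have hVle : ∀ x, ‖V x‖ ≤ ‖v x‖ := fun x => by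
    rw [hVdef, norm_smul]
    exact mul_le_of_le_one_left (norm_nonneg _) (Tr'_le _ _)
  have hV2 : MemLp V 2 (measW n d Γ) := hv2.mono (hVm.mono_ac measW_ac) (ae_of_all _ hVle)
  have hVl := H.loc_of_L2 hVm hV2
  have hbl : LocallyIntegrable b volume := hu.mono hbm (ae_of_all _ fun x => Tr_le _ _)
  have hg : IsDistribGradOn b V univ := H.remov hbB hbm hVl
    (H.chain (Tr_cd _) (Tr_deriv _) (Tr'_cont _) (Tr_bd he) (Tr'_le _) hu hvl h hv2)
  obtain ⟨φ, φ1, φ2, φ3, φ4, φ5⟩ := H.cutoff (k + 1) ((eps k ^ 2) ^ 2) (by linarith [Nat.cast_nonneg (α := ℝ) k]) (by positivity)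
  have hp : (0 : ℝ≥0∞) < ENNReal.ofReal (eps k) := by simpa using he
  obtain ⟨j, hj1, hj2⟩ := (((moll_L1 hbl hbB (k + 1)).eventually (gt_mem_nhds hp)).and 
    ((H.moll_L2 hVl hV2).eventually (gt_mem_nhds hp))).exists
  have ms := moll_contDiff j hbl
  have msV := moll_contDiff j hVl
  refine ⟨fun x => φ x * moll j b x, φ, φ1.mul ms, φ2.mul_right, φ1.continuous, φ3, φ4, ?_, ?_⟩
  · refine le_trans (le_of_eq ?_) hj1.le
    apply setLIntegral_congr_fun measurableSet_ball
    intro x hx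
    simp only [mem_ball, dist_zero_right] at hx
    simp only [φ4 x hx.le, one_mul, hbdef]
  · have e1 : (fun x => gradient (fun x => φ x * moll j b x) x - φ x • Tr' (eps k) (u x) • v x) = 
        (fun x => φ x • (moll j V x - V x)) + fun x => moll j b x • gradient φ x := by
      ext1 x
      rw [grad_mul (φ1.differentiable (by simp) x) (ms.differentiable (by simp) x), 
        moll_grad j hbl hVl hg (subset_univ _)]
      simp only [Pi.add_apply, smul_sub, hVdef]
      abel
    rw [e1]
    have φg : Continuous (gradient φ) := grad_cont (φ1.of_le (by exact_mod_cast le_top))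
    refine (eLpNorm_add_le ?_ ?_ (by norm_num)).trans ?_
    · exact (φ1.continuous.aestronglyMeasurable.smul 
        (msV.continuous.aestronglyMeasurable.sub (hVm.mono_ac measW_ac)))
    · exact (ms.continuous.smul φg).aestronglyMeasurable
    gcongr
    · refine le_trans (eLpNorm_mono fun x => ?_) hj2.le
      rw [norm_smul, Real.norm_of_nonneg (φ3 x).1]
      exact mul_le_of_le_one_left (norm_nonneg _) (φ3 x).2
    · refine (eLpNorm_le_mul_eLpNorm_of_ae_le_mul (g := gradient φ) (c := 1 / eps k) (ae_of_all _ fun x => ?_) 2).trans ?_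
      · rw [norm_smul]
        gcongr
        exact moll_norm_le j hbB x
      · rw [eLp_sq]
        have : (∫⁻ x, ‖gradient φ x‖ₑ ^ 2 ∂(measW n d Γ)) ^ (1/2:ℝ) ≤ ENNReal.ofReal (eps k ^ 2) := by
          refine (ENNReal.rpow_le_rpow φ5 (by norm_num)).trans (le_of_eq ?_)
          rw [ENNReal.ofReal_rpow_of_nonneg (by positivity) (by norm_num), ← Real.sqrt_eq_rpow, Real.sqrt_sq (by positivity)]
        refine (mul_le_mul_right this _).trans ?_
        rw [← ENNReal.ofReal_mul (by positivity)]
        apply ENNReal.ofReal_le_ofReal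
        apply le_of_eq; field_simp

lemma Hyp.main (H : Hyp n d C₀ Γ) {u : Euc n → ℝ} {v : Euc n → Euc n} (hu : LocallyIntegrable u volume)
    (hv : AEStronglyMeasurable v volume) (hv2 : MemLp v 2 (measW n d Γ)) (h : IsDistribGradOn u v Γᶜ) :
    ∃ uk : ℕ → Euc n → ℝ, (∀ k, ContDiff ℝ (⊤ : ℕ∞) (uk k) ∧ HasCompactSupport (uk k)) ∧
      (∀ K : Set (Euc n), IsCompact K → Tendsto (fun k => ∫⁻ y in K, ‖uk k y - u y‖ₑ) atTop (𝓝 0)) ∧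
      Tendsto (fun k => eLpNorm (fun x => gradient (uk k) x - v x) 2 (measW n d Γ)) atTop (𝓝 0) := by
  choose w φ w1 w2 φ1 φ2 φ3 w3 w4 using H.step hu hv hv2 h
  have T : Tendsto (fun k => ENNReal.ofReal (eps k)) atTop (𝓝 0) := by
    simpa using ENNReal.tendsto_ofReal eps_tendsto
  refine ⟨w, fun k => ⟨w1 k, w2 k⟩, fun K hK => ?_, ?_⟩
  · have um := hu.aestronglyMeasurable
    have bm : ∀ k, AEStronglyMeasurable (fun x => Tr (eps k) (u x)) volume := fun k => 
      (Tr_cd _).continuous.comp_aestronglyMeasurable um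
    have T2 : Tendsto (fun k => ∫⁻ y in K, ‖Tr (eps k) (u y) - u y‖ₑ) atTop (𝓝 (∫⁻ y in K, 0)) := by
      apply tendsto_lintegral_of_dominated_convergence' (fun x => ‖u x‖ₑ + ‖u x‖ₑ)
      · exact fun k => ((bm k).sub um).enorm.restrict
      · intro k
        filter_upwards with x
        refine (enorm_sub_le).trans ?_
        gcongr
        rw [← ofReal_norm, ← ofReal_norm]
        exact ENNReal.ofReal_le_ofReal (Tr_le _ _)
      · have : ∫⁻ x in K, ‖u x‖ₑ ≠ ⊤ := (hu.integrableOn_isCompact hK).2.ne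
        rw [lintegral_add_left' um.enorm.restrict]
        exact ENNReal.add_ne_top.2 ⟨this, this⟩
      · filter_upwards with x
        have := ((Tr_tendsto (u x)).sub_const (u x)).enorm
        simpa using this
    rw [lintegral_zero] at T2
    have T3 := T.add T2
    rw [add_zero] at T3
    obtain ⟨R, hR⟩ := hK.isBounded.subset_ball (0 : Euc n)
    refine tendsto_of_tendsto_of_tendsto_of_le_of_le' tendsto_const_nhds T3 (Eventually.of_forall fun _ => zero_le) ?_
    filter_upwards [tendsto_natCast_atTop_atTop.eventually_ge_atTop R] with k hk
    have hKb : K ⊆ ball (0 : Euc n) (k + 1) := hR.trans (ball_subset_ball (by linarith))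
    calc ∫⁻ y in K, ‖w k y - u y‖ₑ ≤ ∫⁻ y in K, (‖w k y - Tr (eps k) (u y)‖ₑ + ‖Tr (eps k) (u y) - u y‖ₑ) := by
          apply lintegral_mono
          intro y
          have := enorm_add_le (w k y - Tr (eps k) (u y)) (Tr (eps k) (u y) - u y)
          rwa [sub_add_sub_cancel] at this
      _ = (∫⁻ y in K, ‖w k y - Tr (eps k) (u y)‖ₑ) + ∫⁻ y in K, ‖Tr (eps k) (u y) - u y‖ₑ := by
          exact lintegral_add_right' _ ((bm k).sub um).enorm.restrict
      _ ≤ _ := by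
          gcongr
          exact (lintegral_mono_set hKb).trans (w3 k)
  · set m := measW n d Γ with hm
    have hvm := hv.mono_ac (measW_ac (n := n) (d := d) (Γ := Γ))
    have hum := hu.aestronglyMeasurable.mono_ac (measW_ac (n := n) (d := d) (Γ := Γ))
    have Vm : ∀ k, AEStronglyMeasurable (fun x => φ k x • Tr' (eps k) (u x) • v x) m := fun k =>
      (φ1 k).aestronglyMeasurable.smul (((Tr'_cont _).comp_aestronglyMeasurable hum).smul hvm)
    have T2 : Tendsto (fun k => ∫⁻ x, ‖φ k x • Tr' (eps k) (u x) • v x - v x‖ₑ ^ 2 ∂m) atTop (𝓝 (∫⁻ x, 0 ∂m)) := by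
      apply tendsto_lintegral_of_dominated_convergence' (fun x => 4 * ‖v x‖ₑ ^ 2)
      · exact fun k => (((Vm k).sub hvm).enorm).pow_const 2
      · intro k
        filter_upwards with x
        have : ‖φ k x • Tr' (eps k) (u x) • v x - v x‖ₑ ≤ ‖v x‖ₑ + ‖v x‖ₑ := by
          refine (enorm_sub_le).trans ?_
          gcongr
          rw [← ofReal_norm, ← ofReal_norm, norm_smul, norm_smul]
          apply ENNReal.ofReal_le_ofReal
          rw [← mul_assoc]
          apply mul_le_of_le_one_left (norm_nonneg _)
          rw [Real.norm_of_nonneg (φ2 k x).1]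
          exact mul_le_one₀ (φ2 k x).2 (norm_nonneg _) (Tr'_le _ _)
        calc _ ≤ (‖v x‖ₑ + ‖v x‖ₑ) ^ 2 := by gcongr
          _ = _ := by ring
      · have := hv2.2
        rw [eLp_sq] at this
        rw [lintegral_const_mul' _ _ (by simp)]
        apply ENNReal.mul_ne_top (by simp)
        intro hh
        rw [hh] at this
        simp at this
      · filter_upwards with x
        have h1 : Tendsto (fun k => φ k x) atTop (𝓝 1) := by
          apply tendsto_const_nhds.congr'
          filter_upwards [tendsto_natCast_atTop_atTop.eventually_ge_atTop ‖x‖] with k hk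
          rw [φ3 k x (by linarith)]
        have h2 := h1.smul ((Tr'_tendsto (u x)).smul_const (v x))
        have h3 := ENNReal.Tendsto.pow (n := 2) ((h2.sub_const (v x)).enorm)
        simpa using h3
    rw [lintegral_zero] at T2
    have T3 : Tendsto (fun k => eLpNorm (fun x => φ k x • Tr' (eps k) (u x) • v x - v x) 2 m) atTop (𝓝 0) := by
      simp_rw [eLp_sq]
      have := T2.ennrpow_const (1/2 : ℝ)
      simpa using this
    have T4 := (T.add T).add T3
    simp only [add_zero] at T4
    refine tendsto_of_tendsto_of_tendsto_of_le_of_le tendsto_const_nhds T4 (fun _ => zero_le) fun k => ?_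
    have e1 : (fun x => gradient (w k) x - v x) = (fun x => gradient (w k) x - φ k x • Tr' (eps k) (u x) • v x) +
        (fun x => φ k x • Tr' (eps k) (u x) • v x - v x) := by
      ext1 x; simp
    have gm : AEStronglyMeasurable (gradient (w k)) m :=
      (grad_cont ((w1 k).of_le (by exact_mod_cast le_top))).aestronglyMeasurable
    rw [e1]
    refine (eLpNorm_add_le (gm.sub (Vm k)) ((Vm k).sub hvm) (by norm_num)).trans ?_
    exact add_le_add (w4 k) le_rfl

lemma Hyp.final (H : Hyp n d C₀ Γ) {u : Euc n → ℝ} {v : Euc n → Euc n} (hW : MemW n d Γ u v)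
    (hu : LocallyIntegrable u volume) :
    ∃ uk : ℕ → Euc n → ℝ,
      (∀ k, ContDiff ℝ (⊤ : ℕ∞) (uk k) ∧ HasCompactSupport (uk k)) ∧
      (∀ K : Set (Euc n), IsCompact K →
        Tendsto (fun k => ∫ y in K, |uk k y - u y|) atTop (𝓝 0)) ∧
      Tendsto
        (fun k => ∫⁻ z in Γᶜ,
          ENNReal.ofReal (‖gradient (uk k) z - v z‖ ^ 2) ∂(measW n d Γ))
        atTop (𝓝 0) := by
  have hΓ : MeasurableSet Γᶜ := H.hcl.measurableSet.compl
  set v' := Γᶜ.indicator v with hv'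
  have sq : ∀ z : Euc n, ENNReal.ofReal (‖z‖ ^ 2) = ‖z‖ₑ ^ 2 := fun z => by
    rw [ENNReal.ofReal_pow (norm_nonneg _), ofReal_norm]
  have hm : AEStronglyMeasurable v' volume := 
    (aestronglyMeasurable_indicator_iff hΓ).2 hW.gradLocInt.aestronglyMeasurable
  have h2 : MemLp v' 2 (measW n d Γ) := by
    refine ⟨hm.mono_ac measW_ac, ?_⟩
    rw [eLp_sq]
    apply ENNReal.rpow_lt_top_of_nonneg (by norm_num)
    have := hW.l2
    simp_rw [sq] at this
    rw [← lintegral_indicator hΓ] at this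
    refine ne_of_lt (lt_of_le_of_lt (lintegral_mono fun x => ?_) this)
    by_cases hx : x ∈ Γᶜ
    · simp [hv', indicator_of_mem hx]
    · simp [hv', indicator_of_notMem hx]
  have hg : IsDistribGradOn u v' Γᶜ := by
    intro φ a b c
    rw [hW.isGrad φ a b c]
    congr 1
    apply setIntegral_congr_fun hΓ
    intro x hx
    simp only [hv', indicator_of_mem hx]
  obtain ⟨uk, h3, h4, h5⟩ := H.main hu hm h2 hg
  refine ⟨uk, h3, fun K hK => ?_, ?_⟩
  · rw [tendsto_zero_iff_enorm_tendsto_zero]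
    refine tendsto_of_tendsto_of_tendsto_of_le_of_le tendsto_const_nhds (h4 K hK) (fun _ => zero_le) fun k => ?_
    refine (enorm_integral_le_lintegral_enorm _).trans (le_of_eq ?_)
    simp
  · have h6 := ENNReal.Tendsto.pow (n := 2) h5
    rw [zero_pow two_ne_zero] at h6
    refine tendsto_of_tendsto_of_tendsto_of_le_of_le tendsto_const_nhds h6 (fun _ => zero_le) fun k => ?_
    simp only [sq]
    rw [eLp_sq, ← ENNReal.rpow_natCast, ← ENNReal.rpow_mul]
    norm_num
    refine le_trans (le_of_eq ?_) (setLIntegral_le_lintegral Γᶜ _)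
    apply setLIntegral_congr_fun hΓ
    intro x hx
    simp only [hv', indicator_of_mem hx]

end S9

/-- when `d ≤ 1`, smooth compactly supported functions are dense in `W`,
with no normalization at infinity. -/
theorem statement9 (n : ℕ) (hn : 2 ≤ n) (d C₀ : ℝ) (hd0 : 0 < d)
    (hdn : d < (n : ℝ) - 1) (hC₀ : 1 ≤ C₀) (hd1 : d ≤ 1)
    (Γ : Set (Euc n)) (hne : Γ.Nonempty) (hcl : IsClosed Γ)
    (hAR : AhlforsRegular n d C₀ Γ)
    (u : Euc n → ℝ) (v : Euc n → Euc n) (hW : MemW n d Γ u v)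
    (hloc : LocallyIntegrable u volume) :
    ∃ uk : ℕ → Euc n → ℝ,
      (∀ k, ContDiff ℝ (⊤ : ℕ∞) (uk k) ∧ HasCompactSupport (uk k)) ∧
      (∀ K : Set (Euc n), IsCompact K →
        Tendsto (fun k => ∫ y in K, |uk k y - u y|) atTop (𝓝 0)) ∧
      Tendsto
        (fun k => ∫⁻ z in Γᶜ,
          ENNReal.ofReal (‖gradient (uk k) z - v z‖ ^ 2) ∂(measW n d Γ))
        atTop (𝓝 0) := by
  exact S9.Hyp.final (C₀ := C₀) ⟨hn, hd0, hdn, hC₀, hd1, hne, hcl, hAR⟩ hW hloc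
end
end

section
/- Extension theorem: there exists a constant C > 0, depending only on n, d, and C₀, such that for every measurable g : Γ → ℝ with ‖g‖_H < ∞ there exists u ∈ W with ‖u‖_W ≤ C ‖g‖_H and such that for σ-almost every x ∈ Γ, lim_{ρ→0} ⨍_{B(x,ρ)} u(y) dy = g(x); that is, the trace of u equals g σ-almost everywhere on Γ. -/
open MeasureTheory Metric Set Filter
open scoped ENNReal NNReal Topology

noncomputable section

lemma measurable_grad {n : ℕ} (u : Euc n → ℝ) : Measurable (gradient u) := by
  have h := measurable_fderiv ℝ u
  exact (InnerProductSpace.toDual ℝ (Euc n)).symm.continuous.measurable.comp h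

lemma norm_grad {n : ℕ} (u : Euc n → ℝ) (x : Euc n) : ‖gradient u x‖ = ‖fderiv ℝ u x‖ := by
  simp [gradient]

lemma inner_grad {n : ℕ} (u : Euc n → ℝ) (x w : Euc n) :
    inner ℝ w (gradient u x) = fderiv ℝ u x w := by
  rw [real_inner_comm, gradient, InnerProductSpace.toDual_symm_apply]

lemma grad_locInt {n : ℕ} {u : Euc n → ℝ} {U : Set (Euc n)}
    (hu : ∀ x ∈ U, ∃ K, ∃ t ∈ 𝓝 x, LipschitzOnWith K u t) :
    LocallyIntegrableOn (gradient u) U volume := by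
  intro x hx
  obtain ⟨K, t, ht, hK⟩ := hu x hx
  obtain ⟨ε, hε, hb⟩ := Metric.mem_nhds_iff.1 ht
  refine ⟨ball x ε, nhdsWithin_le_nhds (ball_mem_nhds x hε), ?_⟩
  refine Measure.integrableOn_of_bounded (M := K) measure_ball_lt_top.ne
    (measurable_grad u).aestronglyMeasurable ?_
  rw [ae_restrict_iff' measurableSet_ball]
  refine Eventually.of_forall fun y hy => ?_
  rw [norm_grad]
  exact norm_fderiv_le_of_lipschitzOn ℝ (mem_of_superset (isOpen_ball.mem_nhds hy) hb) hK

lemma ibp {n : ℕ} {u : Euc n → ℝ} {U : Set (Euc n)} (hU : IsOpen U)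
    (hu : ∀ x ∈ U, ∃ K, ∃ t ∈ 𝓝 x, LipschitzOnWith K u t) :
    IsDistribGradOn u (gradient u) U := by
  intro φ hφ hφc hφU
  have hgφ : ∀ x, x ∉ tsupport φ → gradient φ x = 0 := by
    intro x hx
    have : fderiv ℝ φ x = 0 := by
      by_contra h
      exact hx (support_fderiv_subset ℝ h)
    simp [gradient, this]
  rw [setIntegral_eq_integral_of_forall_compl_eq_zero (fun x hx => by
      rw [hgφ x (fun h => hx (hφU h)), smul_zero]),
    setIntegral_eq_integral_of_forall_compl_eq_zero (fun x hx => by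
      rw [image_eq_zero_of_notMem_tsupport (fun h => hx (hφU h)), zero_smul])]
  obtain ⟨K', hK'c, hK1, hK2⟩ := exists_compact_between hφc.isCompact hU hφU
  obtain ⟨L, hL⟩ := LocallyLipschitzOn.exists_lipschitzOnWith_of_compact (f := u) hK'c (by
    intro x hx
    obtain ⟨K, t, ht, h⟩ := hu x (hK2 hx)
    exact ⟨K, t, mem_nhdsWithin_of_mem_nhds ht, h⟩)
  obtain ⟨f, hf, hfu⟩ := hL.extend_real
  have hfu' : ∀ x ∈ tsupport φ, f =ᶠ[𝓝 x] u := by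
    intro x hx
    filter_upwards [mem_interior_iff_mem_nhds.1 (hK1 hx)] with y hy using (hfu hy).symm
  have e1 : (fun x => u x • gradient φ x) = fun x => f x • gradient φ x := by
    funext x
    by_cases hx : x ∈ tsupport φ
    · rw [(hfu' x hx).eq_of_nhds]
    · rw [hgφ x hx, smul_zero, smul_zero]
  have e2 : (fun x => φ x • gradient u x) = fun x => φ x • gradient f x := by
    funext x
    by_cases hx : x ∈ tsupport φ
    · simp only [gradient, (hfu' x hx).fderiv_eq]
    · rw [image_eq_zero_of_notMem_tsupport hx, zero_smul, zero_smul]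
  rw [e1, e2]
  have hφd : ContDiff ℝ 1 φ := hφ.of_le (by exact_mod_cast le_top)
  have hφg : Continuous (gradient φ) :=
    (InnerProductSpace.toDual ℝ (Euc n)).symm.continuous.comp (hφd.continuous_fderiv (by simp))
  have hφgc : HasCompactSupport (gradient φ) := by
    refine HasCompactSupport.intro hφc.isCompact hgφ
  obtain ⟨D, hD⟩ := hφd.lipschitzWith_of_hasCompactSupport hφc (by simp)
  have i1 : Integrable (fun x => f x • gradient φ x) volume :=
    (hf.continuous.smul hφg).integrable_of_hasCompactSupport hφgc.smul_left
  have i2 : Integrable (fun x => φ x • gradient f x) volume := by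
    have hφi : Integrable φ volume := hφd.continuous.integrable_of_hasCompactSupport hφc
    refine hφi.smul_bdd L (measurable_grad f).aestronglyMeasurable
      (Eventually.of_forall fun x => ?_)
    rw [norm_grad]
    exact norm_fderiv_le_of_lipschitz ℝ hf
  refine ext_inner_left ℝ fun w => ?_
  rw [inner_neg_right, ← integral_inner i1, ← integral_inner i2]
  have key := hf.integral_lineDeriv_mul_eq (μ := volume) hD hφc w
  have k1 : ∫ x, inner ℝ w (φ x • gradient f x) = ∫ x, lineDeriv ℝ f x w * φ x := by
    refine integral_congr_ae ?_
    filter_upwards [hf.ae_differentiableAt (μ := volume)] with x hx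
    rw [inner_smul_right, inner_grad, hx.lineDeriv_eq_fderiv, mul_comm]
  have k2 : ∫ x, inner ℝ w (f x • gradient φ x) = - ∫ x, lineDeriv ℝ φ x (-w) * f x := by
    rw [← integral_neg]
    refine integral_congr_ae (Eventually.of_forall fun x => ?_)
    simp only
    rw [inner_smul_right, inner_grad, ((hφd.differentiable (by simp)) x).lineDeriv_eq_fderiv]
    simp [mul_comm]
  rw [k1, k2, key]

lemma scale_lint {n : ℕ} (h : ℝ → ℝ≥0∞) (hm : Measurable h) (y : Euc n) (r : ℝ) (hr : 0 < r) :
    ∫⁻ x : Euc n, h (dist x y) = ENNReal.ofReal (r ^ n) * ∫⁻ x : Euc n, h (r * ‖x‖) := by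
  have h1 : ∫⁻ x : Euc n, h (dist x y) = ∫⁻ x : Euc n, h ‖x‖ := by
    simp_rw [dist_eq_norm]
    exact lintegral_sub_right_eq_self (fun x : Euc n => h ‖x‖) y
  have hmeas : Measurable fun x : Euc n => r • x := by fun_prop
  have hmn : Measurable fun x : Euc n => h ‖x‖ := hm.comp measurable_norm
  have h2 := Measure.map_addHaar_smul (volume : Measure (Euc n)) hr.ne'
  have h3 : ∫⁻ x : Euc n, h (r * ‖x‖) = ENNReal.ofReal (r ^ n)⁻¹ * ∫⁻ x : Euc n, h ‖x‖ := by
    have : ∫⁻ x : Euc n, h ‖x‖ ∂(Measure.map (r • ·) volume) = ∫⁻ x : Euc n, h (r * ‖x‖) := by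
      rw [lintegral_map hmn hmeas]
      simp [norm_smul, abs_of_pos hr]
    rw [← this, h2, lintegral_smul_measure]
    simp [abs_of_pos hr]
  rw [h1, h3, ← mul_assoc, ← ENNReal.ofReal_mul (by positivity), mul_inv_cancel₀ (by positivity)]
  simp

lemma kernel_outer (n : ℕ) (hn : 2 ≤ n) (d : ℝ) (hd : 0 < d) :
    ∃ A : ℝ≥0∞, A ≠ ⊤ ∧ ∀ (y : Euc n) (r : ℝ), 0 < r →
      ∫⁻ x : Euc n, (Ici r).indicator (fun t => ENNReal.ofReal (t ^ (-((n : ℝ) + 1 + d)))) (dist x y)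
        ≤ A * ENNReal.ofReal (r ^ (-(d + 1))) := by
  refine ⟨∫⁻ x : Euc n, (Ici (1:ℝ)).indicator
    (fun t => ENNReal.ofReal (t ^ (-((n : ℝ) + 1 + d)))) ‖x‖, ?_, ?_⟩
  · have hfin := finite_integral_one_add_norm (E := Euc n) (μ := volume) (r := (n : ℝ) + 1 + d)
      (by simp; linarith)
    refine ne_of_lt (lt_of_le_of_lt (b := ENNReal.ofReal (2 ^ ((n : ℝ) + 1 + d)) *
      ∫⁻ x : Euc n, ENNReal.ofReal ((1 + ‖x‖) ^ (-((n : ℝ) + 1 + d)))) ?_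
      (ENNReal.mul_lt_top ENNReal.ofReal_lt_top hfin))
    rw [← lintegral_const_mul' _ _ ENNReal.ofReal_ne_top]
    refine lintegral_mono fun x => ?_
    by_cases hx : ‖x‖ ∈ Ici (1:ℝ)
    · rw [indicator_of_mem hx, ← ENNReal.ofReal_mul (by positivity)]
      apply ENNReal.ofReal_le_ofReal
      have hx1 : (1:ℝ) ≤ ‖x‖ := hx
      have hs : (2:ℝ) ^ ((n : ℝ) + 1 + d) = ((2:ℝ)⁻¹) ^ (-((n : ℝ) + 1 + d)) := by
        rw [Real.inv_rpow (by norm_num), ← Real.rpow_neg (by norm_num), neg_neg]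
      rw [hs, ← Real.mul_rpow (by norm_num) (by positivity)]
      apply Real.rpow_le_rpow_of_nonpos (by positivity) (by linarith)
      have : (0:ℝ) ≤ n := by positivity
      linarith
    · rw [indicator_of_notMem hx]; exact zero_le
  · intro y r hr
    rw [scale_lint _ ((by fun_prop : Measurable _).indicator measurableSet_Ici) y r hr]
    have : ∀ x : Euc n, (Ici r).indicator (fun t => ENNReal.ofReal (t ^ (-((n : ℝ) + 1 + d))))
        (r * ‖x‖) = ENNReal.ofReal (r ^ (-((n : ℝ) + 1 + d))) * (Ici (1:ℝ)).indicator
        (fun t => ENNReal.ofReal (t ^ (-((n : ℝ) + 1 + d)))) ‖x‖ := by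
      intro x
      by_cases hx : (1:ℝ) ≤ ‖x‖
      · have h1 : r * ‖x‖ ∈ Ici r := by simp only [mem_Ici]; nlinarith
        rw [indicator_of_mem h1, indicator_of_mem (by exact hx), Real.mul_rpow hr.le (norm_nonneg _),
          ENNReal.ofReal_mul (by positivity)]
      · have h1 : r * ‖x‖ ∉ Ici r := by simp only [mem_Ici]; push Not at hx ⊢; nlinarith
        rw [indicator_of_notMem h1, indicator_of_notMem (by exact hx), mul_zero]
    simp_rw [this]
    rw [lintegral_const_mul' _ _ ENNReal.ofReal_ne_top, ← mul_assoc,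
      ← ENNReal.ofReal_mul (by positivity), mul_comm, ← Real.rpow_natCast, ← Real.rpow_add hr]
    apply le_of_eq
    congr 3
    ring

lemma kernel_inner (n : ℕ) (hn : 2 ≤ n) (d : ℝ) (hdn : d < n) :
    ∃ A : ℝ≥0∞, A ≠ ⊤ ∧ ∀ (y : Euc n) (r : ℝ), 0 < r →
      ∫⁻ x : Euc n, (Iio r).indicator (fun t => ENNReal.ofReal (t ^ (-d))) (dist x y)
        ≤ A * ENNReal.ofReal (r ^ ((n : ℝ) - d)) := by
  refine ⟨∫⁻ x : Euc n, (Iio (1:ℝ)).indicator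
    (fun t => ENNReal.ofReal (t ^ (-d))) ‖x‖, ?_, ?_⟩
  · have hi := integrableOn_ball_of_norm_le_rpow (E := Euc n) (μ := volume) (by simp; omega)
      (f := fun x => ‖x‖ ^ (-d)) (C := 1) (α := d) (r := 1) (by simpa using hdn)
      (Eventually.of_forall fun x => by
        rw [Real.norm_of_nonneg (by positivity), one_mul])
      (by apply Measurable.aestronglyMeasurable; fun_prop)
    have h2 := hi.lintegral_lt_top
    rw [← lintegral_indicator measurableSet_ball] at h2
    refine ne_of_lt (lt_of_le_of_lt (lintegral_mono fun x => ?_) h2)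
    by_cases hx : ‖x‖ < 1
    · rw [indicator_of_mem (by exact hx), indicator_of_mem (by simpa using hx)]
    · rw [indicator_of_notMem (by exact hx)]; exact zero_le
  · intro y r hr
    rw [scale_lint _ ((by fun_prop : Measurable _).indicator measurableSet_Iio) y r hr]
    have : ∀ x : Euc n, (Iio r).indicator (fun t => ENNReal.ofReal (t ^ (-d)))
        (r * ‖x‖) = ENNReal.ofReal (r ^ (-d)) * (Iio (1:ℝ)).indicator
        (fun t => ENNReal.ofReal (t ^ (-d))) ‖x‖ := by
      intro x
      by_cases hx : ‖x‖ < 1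
      · have h1 : r * ‖x‖ ∈ Iio r := by simp only [mem_Iio]; nlinarith
        rw [indicator_of_mem h1, indicator_of_mem (by exact hx), Real.mul_rpow hr.le (norm_nonneg _),
          ENNReal.ofReal_mul (by positivity)]
      · have h1 : r * ‖x‖ ∉ Iio r := by simp only [mem_Iio]; push Not at hx ⊢; nlinarith
        rw [indicator_of_notMem h1, indicator_of_notMem (by exact hx), mul_zero]
    simp_rw [this]
    rw [lintegral_const_mul' _ _ ENNReal.ofReal_ne_top, ← mul_assoc,
      ← ENNReal.ofReal_mul (by positivity), mul_comm, ← Real.rpow_natCast, ← Real.rpow_add hr]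
    apply le_of_eq
    congr 3

lemma sq_lintegral_le_meas {α : Type*} [MeasurableSpace α] (μ : Measure α) (f : α → ℝ≥0∞)
    (hf : AEMeasurable f μ) : (∫⁻ x, f x ∂μ) ^ 2 ≤ μ univ * ∫⁻ x, f x ^ 2 ∂μ := by
  have h := ENNReal.lintegral_mul_le_Lp_mul_Lq μ Real.HolderConjugate.two_two
    (f := fun _ => 1) (g := f) aemeasurable_const hf
  simp only [Pi.mul_apply, one_mul, ENNReal.one_rpow, lintegral_const] at h
  calc (∫⁻ x, f x ∂μ) ^ 2 ≤ ((μ univ) ^ (1 / (2:ℝ)) * (∫⁻ x, f x ^ (2:ℝ) ∂μ) ^ (1 / (2:ℝ))) ^ 2 := by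
        gcongr
    _ = _ := by
      rw [mul_pow, ← ENNReal.rpow_natCast, ← ENNReal.rpow_natCast, ← ENNReal.rpow_mul,
        ← ENNReal.rpow_mul]
      norm_num

lemma volume_null_of_ahlfors {n : ℕ} {d C₀ : ℝ} (hdn : d < n) {Γ : Set (Euc n)}
    (hne : Γ.Nonempty) (h : AhlforsRegular n d C₀ Γ) : volume Γ = 0 := by
  obtain ⟨p, hp⟩ := hne
  have hΓ : Γ = ⋃ k : ℕ, Γ ∩ ball p (k + 1) := by
    rw [← inter_iUnion]
    refine (inter_eq_left.2 fun x _ => ?_).symm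
    obtain ⟨k, hk⟩ := exists_nat_gt (dist x p)
    exact mem_iUnion.2 ⟨k, by simp; linarith⟩
  rw [hΓ, measure_iUnion_null_iff]
  intro k
  set s := Γ ∩ ball p (k + 1)
  have h1 : μH[d] s < ⊤ := ((h p hp (k + 1) (by positivity)).2).trans_lt ENNReal.ofReal_lt_top
  have h2 : μH[(n : ℝ)] s = 0 := by
    rcases Measure.hausdorffMeasure_zero_or_top hdn s with h | h
    · exact h
    · exact absurd h h1.ne
  have h3 : μH[(n : ℝ)] ((WithLp.ofLp : Euc n → Fin n → ℝ) '' s) = 0 := by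
    have := (PiLp.lipschitzWith_ofLp 2 (fun _ : Fin n => ℝ)).hausdorffMeasure_image_le
      (d := n) (by positivity) s
    rw [h2] at this
    simpa using this
  have h4 := hausdorffMeasure_pi_real (ι := Fin n)
  rw [Fintype.card_fin] at h4
  rw [h4] at h3
  have h5 := (PiLp.volume_preserving_ofLp (Fin n)).measure_preimage (s := (WithLp.ofLp : Euc n → Fin n → ℝ) '' s) (NullMeasurableSet.of_null h3)
  rw [h3] at h5
  exact measure_mono_null (subset_preimage_image _ _) h5

structure Setup {n : ℕ} (d C₀ : ℝ) (Γ : Set (Euc n)) (σ : Measure (Euc n)) (g : Euc n → ℝ) :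
    Prop where
  hn : 2 ≤ n
  hd0 : 0 < d
  hdn : d < (n : ℝ) - 1
  hC : 1 ≤ C₀
  ne : Γ.Nonempty
  cl : IsClosed Γ
  lo : ∀ x ∈ Γ, ∀ r : ℝ, 0 < r → ENNReal.ofReal (C₀⁻¹ * r ^ d) ≤ σ (ball x r)
  up : ∀ x ∈ Γ, ∀ r : ℝ, 0 < r → σ (ball x r) ≤ ENNReal.ofReal (C₀ * r ^ d)
  ae : ∀ᵐ y ∂σ, y ∈ Γ
  gm : Measurable g
  en : ∫⁻ x, ∫⁻ y, ENNReal.ofReal (|g x - g y| ^ 2) / ENNReal.ofReal (dist x y ^ (d + 1)) ∂σ ∂σ < ⊤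
  sf : SFinite σ

def kk {n : ℕ} (Γ : Set (Euc n)) (x y : Euc n) : ℝ := max 0 (3 * infDist x Γ - dist x y)

def DD {n : ℕ} (Γ : Set (Euc n)) (σ : Measure (Euc n)) (x : Euc n) : ℝ := ∫ y, kk Γ x y ∂σ

def uu {n : ℕ} (Γ : Set (Euc n)) (σ : Measure (Euc n)) (g : Euc n → ℝ) (x : Euc n) : ℝ :=
  (∫ y, kk Γ x y * g y ∂σ) / DD Γ σ x

def EE {n : ℕ} (d : ℝ) (σ : Measure (Euc n)) (g : Euc n → ℝ) (x : Euc n) : ℝ≥0∞ :=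
  ∫⁻ y, ENNReal.ofReal (|g x - g y| ^ 2) / ENNReal.ofReal (dist x y ^ (d + 1)) ∂σ

lemma kk_nonneg {n : ℕ} (Γ : Set (Euc n)) (x y : Euc n) : 0 ≤ kk Γ x y := le_max_left _ _

lemma kk_le {n : ℕ} (Γ : Set (Euc n)) (x y : Euc n) : kk Γ x y ≤ 3 * infDist x Γ := by
  have := infDist_nonneg (x := x) (s := Γ)
  exact max_le (by positivity) (by linarith [dist_nonneg (x := x) (y := y)])

lemma kk_zero {n : ℕ} (Γ : Set (Euc n)) (x y : Euc n) (h : y ∉ ball x (3 * infDist x Γ)) :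
    kk Γ x y = 0 := by
  rw [mem_ball, not_lt, dist_comm] at h
  exact max_eq_left (by linarith)

lemma kk_cont {n : ℕ} (Γ : Set (Euc n)) (x : Euc n) : Continuous (kk Γ x) := by
  unfold kk; fun_prop

lemma kk_lip {n : ℕ} (Γ : Set (Euc n)) (x x' y : Euc n) :
    |kk Γ x' y - kk Γ x y| ≤ 4 * dist x' x := by
  unfold kk
  rw [max_comm (0:ℝ), max_comm (0:ℝ)]
  refine (abs_max_sub_max_le_abs _ _ _).trans ?_
  · have h1 := infDist_le_infDist_add_dist (s := Γ) (x := x) (y := x')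
    have h2 := infDist_le_infDist_add_dist (s := Γ) (x := x') (y := x)
    have h3 := dist_triangle x x' y
    have h4 := dist_triangle x' x y
    rw [dist_comm x x'] at *
    rw [abs_le]; constructor <;> linarith

namespace Setup
variable {n : ℕ} {d C₀ : ℝ} {Γ : Set (Euc n)} {σ : Measure (Euc n)} {g : Euc n → ℝ}

lemma ball_fin (S : Setup d C₀ Γ σ g) (x : Euc n) (r : ℝ) : σ (ball x r) < ⊤ := by
  obtain ⟨p, hp⟩ := S.ne
  refine lt_of_le_of_lt (measure_mono ?_) ((S.up p hp (|r| + dist x p + 1) (by positivity)).trans_lt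
    ENNReal.ofReal_lt_top)
  intro y hy
  rw [mem_ball] at hy ⊢
  linarith [dist_triangle y x p, le_abs_self r]

lemma dpos (S : Setup d C₀ Γ σ g) {x : Euc n} (hx : x ∉ Γ) : 0 < infDist x Γ :=
  (S.cl.notMem_iff_infDist_pos S.ne).1 hx

lemma C0pos (S : Setup d C₀ Γ σ g) : 0 < C₀ := lt_of_lt_of_le one_pos S.hC

lemma sigma_ne (S : Setup d C₀ Γ σ g) : σ ≠ 0 := by
  obtain ⟨p, hp⟩ := S.ne
  intro h
  have := S.lo p hp 1 one_pos
  have h2 := S.C0pos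
  simp [h] at this
  linarith

lemma EE_meas (S : Setup d C₀ Γ σ g) : Measurable (EE d σ g) := by
  have := S.sf
  have := S.gm
  unfold EE
  apply Measurable.lintegral_prod_right'
    (f := fun q : Euc n × Euc n => ENNReal.ofReal (|g q.1 - g q.2| ^ 2) / ENNReal.ofReal (dist q.1 q.2 ^ (d + 1)))
  fun_prop

lemma EE_ae (S : Setup d C₀ Γ σ g) : ∀ᵐ x ∂σ, EE d σ g x < ⊤ :=
  ae_lt_top S.EE_meas S.en.ne

lemma exists_good (S : Setup d C₀ Γ σ g) : ∃ p ∈ Γ, EE d σ g p < ⊤ := by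
  have : NeBot (MeasureTheory.ae σ) := ae_neBot.2 S.sigma_ne
  exact (S.ae.and S.EE_ae).exists

lemma loc_bound (S : Setup d C₀ Γ σ g) (p : Euc n) (r : ℝ) (hr : 0 < r) :
    (∫⁻ y in ball p r, ENNReal.ofReal |g y - g p| ∂σ) ^ 2 ≤
      σ (ball p r) * (ENNReal.ofReal (r ^ (d + 1)) * EE d σ g p) := by
  have hg := S.gm
  refine (sq_lintegral_le_meas _ _ (by fun_prop)).trans ?_
  rw [Measure.restrict_apply_univ]
  gcongr
  rw [EE, ← lintegral_const_mul' _ _ ENNReal.ofReal_ne_top]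
  refine (setLIntegral_mono' measurableSet_ball ?_).trans (setLIntegral_le_lintegral _ _)
  intro y hy
  rw [← ENNReal.ofReal_pow (abs_nonneg _), abs_sub_comm]
  by_cases hyp : p = y
  · simp [hyp]
  · have hpos : 0 < dist p y := dist_pos.2 hyp
    have hd := S.hd0
    rw [mem_ball, dist_comm] at hy
    rw [← mul_div_assoc, ENNReal.le_div_iff_mul_le (Or.inl (by simp; positivity)) (Or.inl (by simp)),
      mul_comm]
    gcongr

lemma g_int (S : Setup d C₀ Γ σ g) (x : Euc n) (r : ℝ) : IntegrableOn g (ball x r) σ := by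
  obtain ⟨p, hp, hE⟩ := S.exists_good
  have hR : 0 < |r| + dist x p + 1 := by positivity
  refine IntegrableOn.mono_set (t := ball p (|r| + dist x p + 1)) ?_ ?_
  · have h1 := S.loc_bound p _ hR
    have h2 : IntegrableOn (fun y => g y - g p) (ball p (|r| + dist x p + 1)) σ := by
      refine ⟨(S.gm.sub_const _).aestronglyMeasurable, ?_⟩
      rw [hasFiniteIntegral_iff_norm]
      have : (∫⁻ y in ball p (|r| + dist x p + 1), ENNReal.ofReal |g y - g p| ∂σ) ^ 2 < ⊤ :=
        h1.trans_lt (ENNReal.mul_lt_top (S.ball_fin _ _)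
          (ENNReal.mul_lt_top ENNReal.ofReal_lt_top hE))
      simpa using this
    have h3 := h2.add (integrableOn_const (C := g p) (S.ball_fin _ _).ne)
    refine h3.congr (Eventually.of_forall fun y => ?_)
    simp
  · intro y hy
    rw [mem_ball] at hy ⊢
    linarith [dist_triangle y x p, le_abs_self r]

lemma gc_int (S : Setup d C₀ Γ σ g) (c : ℝ) (x : Euc n) (r : ℝ) :
    IntegrableOn (fun y => |g y - c|) (ball x r) σ :=
  ((S.g_int x r).sub (integrableOn_const (C := c) (S.ball_fin _ _).ne)).abs

lemma kint (Γ : Set (Euc n)) (x : Euc n) {h : Euc n → ℝ}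
    (hh : IntegrableOn h (ball x (3 * infDist x Γ)) σ) :
    Integrable (fun y => kk Γ x y * h y) σ := by
  rw [← integrableOn_iff_integrable_of_support_subset (s := ball x (3 * infDist x Γ))]
  · refine Integrable.bdd_mul (c := 3 * infDist x Γ) hh
      (kk_cont Γ x).aestronglyMeasurable (Eventually.of_forall fun y => ?_)
    rw [Real.norm_of_nonneg (kk_nonneg _ _ _)]
    exact kk_le _ _ _
  · intro y hy
    by_contra h
    exact hy (by simp [kk_zero Γ x y h])

lemma k_int (S : Setup d C₀ Γ σ g) (x : Euc n) : Integrable (kk Γ x) σ := by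
  simpa using kint (σ := σ) Γ x (h := fun _ => 1) (integrableOn_const (S.ball_fin _ _).ne)

lemma D_lo (S : Setup d C₀ Γ σ g) {x : Euc n} (hx : x ∉ Γ) :
    C₀⁻¹ * infDist x Γ ^ (d + 1) ≤ DD Γ σ x := by
  have hp := S.dpos hx
  have hC := S.C0pos
  obtain ⟨z, hz, hzx⟩ := S.cl.exists_infDist_eq_dist S.ne x
  set δ := infDist x Γ with hδ
  have h1 : C₀⁻¹ * δ ^ d ≤ σ.real (ball z δ) := by
    have := S.lo z hz δ hp
    rw [Measure.real]
    exact (ENNReal.ofReal_le_iff_le_toReal (S.ball_fin _ _).ne).1 this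
  calc C₀⁻¹ * δ ^ (d + 1) = C₀⁻¹ * δ ^ d * δ := by rw [Real.rpow_add_one hp.ne']; ring
    _ ≤ σ.real (ball z δ) * δ := by gcongr
    _ = ∫ y in ball z δ, δ ∂σ := by simp
    _ ≤ ∫ y in ball z δ, kk Γ x y ∂σ := by
      refine setIntegral_mono_on (integrableOn_const (S.ball_fin _ _).ne) (S.k_int x).integrableOn
        measurableSet_ball fun y hy => ?_
      rw [mem_ball, dist_comm] at hy
      refine le_max_of_le_right ?_
      linarith [dist_triangle x z y]
    _ ≤ DD Γ σ x := setIntegral_le_integral (S.k_int x) (Eventually.of_forall fun y => kk_nonneg _ _ _)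

lemma D_pos (S : Setup d C₀ Γ σ g) {x : Euc n} (hx : x ∉ Γ) : 0 < DD Γ σ x := by
  have hp := S.dpos hx
  have hC := S.C0pos
  exact lt_of_lt_of_le (by positivity) (S.D_lo hx)

lemma kgc_int (S : Setup d C₀ Γ σ g) (c : ℝ) (x : Euc n) :
    Integrable (fun y => kk Γ x y * (g y - c)) σ :=
  kint Γ x ((S.g_int _ _).sub (integrableOn_const (C := c) (S.ball_fin _ _).ne))

lemma ident (S : Setup d C₀ Γ σ g) (c : ℝ) {x : Euc n} (hx : x ∉ Γ) :
    DD Γ σ x * (uu Γ σ g x - c) = ∫ y, kk Γ x y * (g y - c) ∂σ := by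
  have hD := (S.D_pos hx).ne'
  simp_rw [mul_sub]
  rw [integral_sub (kint Γ x (S.g_int _ _)) ((S.k_int x).mul_const c), integral_mul_const, uu,
    mul_div_cancel₀ _ hD, DD]

lemma lemA (S : Setup d C₀ Γ σ g) (c : ℝ) {x : Euc n} (hx : x ∉ Γ) :
    |uu Γ σ g x - c| ≤ 3 * C₀ * infDist x Γ ^ (-d) *
      ∫ y in ball x (3 * infDist x Γ), |g y - c| ∂σ := by
  have hp := S.dpos hx
  have hC := S.C0pos
  have hD := S.D_pos hx
  have hlo := S.D_lo hx
  set δ := infDist x Γ with hδ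
  set I := ∫ y in ball x (3 * δ), |g y - c| ∂σ
  have hI : 0 ≤ I := integral_nonneg fun _ => abs_nonneg _
  have h1 : DD Γ σ x * |uu Γ σ g x - c| ≤ 3 * δ * I := by
    rw [← abs_of_pos hD, ← abs_mul, S.ident c hx]
    refine (abs_integral_le_integral_abs).trans ?_
    rw [← setIntegral_eq_integral_of_forall_compl_eq_zero (s := ball x (3 * δ)) (fun y hy => by
      simp [kk_zero Γ x y hy]), ← integral_const_mul]
    refine setIntegral_mono_on (S.kgc_int c x).abs.integrableOn ((S.gc_int c _ _).const_mul _)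
      measurableSet_ball fun y hy => ?_
    rw [abs_mul, abs_of_nonneg (kk_nonneg _ _ _)]
    gcongr
    exact kk_le _ _ _
  have h2 : C₀⁻¹ * δ ^ (d + 1) * |uu Γ σ g x - c| ≤ 3 * δ * I :=
    (mul_le_mul_of_nonneg_right hlo (abs_nonneg _)).trans h1
  have h3 : 0 < δ ^ d := by positivity
  rw [Real.rpow_add_one hp.ne'] at h2
  rw [Real.rpow_neg hp.le]
  have h4 : C₀⁻¹ * δ ^ d * |uu Γ σ g x - c| ≤ 3 * I := by
    have : δ * (C₀⁻¹ * δ ^ d * |uu Γ σ g x - c|) ≤ δ * (3 * I) := by linarith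
    exact le_of_mul_le_mul_left this hp
  calc |uu Γ σ g x - c| = C₀ * (δ ^ d)⁻¹ * (C₀⁻¹ * δ ^ d * |uu Γ σ g x - c|) := by field_simp
    _ ≤ C₀ * (δ ^ d)⁻¹ * (3 * I) := by gcongr
    _ = _ := by ring

lemma two_point (S : Setup d C₀ Γ σ g) {x x' p : Euc n} {R : ℝ} (hx : x ∉ Γ) (hx' : x' ∉ Γ)
    (h1 : ball x (3 * infDist x Γ) ⊆ ball p R) (h2 : ball x' (3 * infDist x' Γ) ⊆ ball p R) :
    |uu Γ σ g x' - uu Γ σ g x| ≤ 4 * C₀ * infDist x' Γ ^ (-(d + 1)) *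
      (∫ y in ball p R, |g y - uu Γ σ g x| ∂σ) * dist x' x := by
  have hp := S.dpos hx'
  have hC := S.C0pos
  have hD := S.D_pos hx'
  have hlo := S.D_lo hx'
  set δ := infDist x' Γ with hδ
  set c := uu Γ σ g x with hc
  set I := ∫ y in ball p R, |g y - c| ∂σ
  have hI : 0 ≤ I := integral_nonneg fun _ => abs_nonneg _
  have h1 : DD Γ σ x' * |uu Γ σ g x' - c| ≤ 4 * dist x' x * I := by
    have e0 := S.ident c hx
    rw [← hc, sub_self, mul_zero] at e0
    rw [← abs_of_pos hD, ← abs_mul, S.ident c hx', ← sub_zero (∫ y, kk Γ x' y * (g y - c) ∂σ), e0,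
      ← integral_sub (S.kgc_int c x') (S.kgc_int c x)]
    refine (abs_integral_le_integral_abs).trans ?_
    rw [← setIntegral_eq_integral_of_forall_compl_eq_zero (s := ball p R) (fun y hy => by
      simp [kk_zero Γ x y (fun h => hy (h1 h)), kk_zero Γ x' y (fun h => hy (h2 h))]),
      ← integral_const_mul]
    refine setIntegral_mono_on ((S.kgc_int c x').sub (S.kgc_int c x)).abs.integrableOn
      ((S.gc_int c _ _).const_mul _) measurableSet_ball fun y hy => ?_
    rw [← sub_mul, abs_mul]
    gcongr
    exact kk_lip _ _ _ _
  have h2 : C₀⁻¹ * δ ^ (d + 1) * |uu Γ σ g x' - c| ≤ 4 * dist x' x * I :=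
    (mul_le_mul_of_nonneg_right hlo (abs_nonneg _)).trans h1
  have h3 : 0 < δ ^ (d + 1) := by positivity
  rw [Real.rpow_neg hp.le]
  calc |uu Γ σ g x' - c|
      = C₀ * (δ ^ (d + 1))⁻¹ * (C₀⁻¹ * δ ^ (d + 1) * |uu Γ σ g x' - c|) := by field_simp
    _ ≤ C₀ * (δ ^ (d + 1))⁻¹ * (4 * dist x' x * I) := by gcongr
    _ = _ := by ring

lemma near (S : Setup d C₀ Γ σ g) {x₀ x : Euc n} (hx₀ : x₀ ∉ Γ)
    (hx : dist x x₀ < infDist x₀ Γ / 8) :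
    x ∉ Γ ∧ infDist x₀ Γ / 2 ≤ infDist x Γ ∧
      ball x (3 * infDist x Γ) ⊆ ball x₀ (4 * infDist x₀ Γ) := by
  have hp := S.dpos hx₀
  have h1 := infDist_le_infDist_add_dist (s := Γ) (x := x) (y := x₀)
  have h2 := infDist_le_infDist_add_dist (s := Γ) (x := x₀) (y := x)
  rw [dist_comm x₀ x] at h2
  refine ⟨?_, by linarith, ball_subset_ball' (by linarith)⟩
  rw [S.cl.notMem_iff_infDist_pos S.ne]
  linarith

lemma grad_bound (S : Setup d C₀ Γ σ g) {x : Euc n} (hx : x ∉ Γ) :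
    ‖gradient (uu Γ σ g) x‖ ≤ 4 * C₀ * (infDist x Γ / 2) ^ (-(d + 1)) *
      ∫ y in ball x (4 * infDist x Γ), |g y - uu Γ σ g x| ∂σ := by
  have hp := S.dpos hx
  have hC := S.C0pos
  have hd := S.hd0
  have hI : 0 ≤ ∫ y in ball x (4 * infDist x Γ), |g y - uu Γ σ g x| ∂σ :=
    integral_nonneg fun _ => abs_nonneg _
  rw [norm_grad]
  refine norm_fderiv_le_of_lip' ℝ (by positivity) ?_
  filter_upwards [ball_mem_nhds x (by positivity : 0 < infDist x Γ / 8)] with x' hx'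
  obtain ⟨a1, a2, a3⟩ := S.near hx hx'
  have := S.two_point hx a1 (ball_subset_ball (by linarith)) a3
  rw [Real.norm_eq_abs, ← dist_eq_norm]
  refine this.trans ?_
  gcongr 4 * C₀ * ?_ * _ * _
  exact Real.rpow_le_rpow_of_nonpos (by positivity) a2 (by linarith)

lemma loc_lip (S : Setup d C₀ Γ σ g) {x₀ : Euc n} (hx₀ : x₀ ∈ Γᶜ) :
    ∃ K, ∃ t ∈ 𝓝 x₀, LipschitzOnWith K (uu Γ σ g) t := by
  have hp := S.dpos hx₀
  have hC := S.C0pos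
  have hd := S.hd0
  set δ := infDist x₀ Γ with hδ
  set B := ball x₀ (4 * δ) with hB
  set G := ∫ y in B, |g y - 0| ∂σ with hG
  have hG0 : 0 ≤ G := integral_nonneg fun _ => abs_nonneg _
  set U := 3 * C₀ * (δ / 2) ^ (-d) * G with hU
  set M := 4 * C₀ * (δ / 2) ^ (-(d + 1)) * (G + U * σ.real B) with hM
  have hM0 : 0 ≤ M := by positivity
  refine ⟨⟨M, hM0⟩, ball x₀ (δ / 8), ball_mem_nhds x₀ (by positivity), ?_⟩
  refine LipschitzOnWith.of_dist_le_mul fun x' hx' x hx => ?_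
  obtain ⟨a1, a2, a3⟩ := S.near hx₀ hx
  obtain ⟨b1, b2, b3⟩ := S.near hx₀ hx'
  have h := S.two_point a1 b1 a3 b3
  have hux : |uu Γ σ g x| ≤ U := by
    have := S.lemA 0 a1
    rw [sub_zero] at this
    refine this.trans ?_
    rw [hU]
    have m1 : infDist x Γ ^ (-d) ≤ (δ / 2) ^ (-d) :=
      Real.rpow_le_rpow_of_nonpos (by positivity) a2 (by linarith)
    have m2 : ∫ y in ball x (3 * infDist x Γ), |g y - 0| ∂σ ≤ G :=
      setIntegral_mono_set (S.gc_int 0 _ _) (Eventually.of_forall fun _ => abs_nonneg _)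
        a3.eventuallyLE
    gcongr
    
  have hint : ∫ y in B, |g y - uu Γ σ g x| ∂σ ≤ G + U * σ.real B := by
    have : ∫ y in B, |g y - uu Γ σ g x| ∂σ ≤ ∫ y in B, (|g y - 0| + U) ∂σ := by
      refine setIntegral_mono_on (S.gc_int _ _ _)
        ((S.gc_int 0 _ _).add (integrableOn_const (S.ball_fin _ _).ne)) measurableSet_ball
        fun y _ => ?_
      rw [sub_zero]
      exact (abs_sub _ _).trans (by gcongr)
    refine this.trans (le_of_eq ?_)
    rw [integral_add (S.gc_int 0 _ _) (integrableOn_const (S.ball_fin _ _).ne)]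
    simp [G, B, mul_comm]
  rw [Real.dist_eq]
  refine h.trans ?_
  change _ ≤ M * _
  rw [hM]
  have m1 : infDist x' Γ ^ (-(d + 1)) ≤ (δ / 2) ^ (-(d + 1)) :=
      Real.rpow_le_rpow_of_nonpos (by positivity) b2 (by linarith)
  have : 0 ≤ ∫ y in B, |g y - uu Γ σ g x| ∂σ := integral_nonneg fun _ => abs_nonneg _
  gcongr

end Setup

namespace Setup
variable {n : ℕ} {d C₀ : ℝ} {Γ : Set (Euc n)} {σ : Measure (Euc n)} {g : Euc n → ℝ}

lemma ofReal_int (S : Setup d C₀ Γ σ g) (c : ℝ) (x : Euc n) (r : ℝ) :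
    ENNReal.ofReal (∫ y in ball x r, |g y - c| ∂σ) = ∫⁻ y in ball x r, ENNReal.ofReal |g y - c| ∂σ :=
  ofReal_integral_eq_lintegral_ofReal (S.gc_int c x r) (Eventually.of_forall fun _ => abs_nonneg _)

lemma lemA' (S : Setup d C₀ Γ σ g) (c : ℝ) {x : Euc n} (hx : x ∉ Γ) :
    ENNReal.ofReal |uu Γ σ g x - c| ≤ ENNReal.ofReal (3 * C₀ * infDist x Γ ^ (-d)) *
      ∫⁻ y in ball x (3 * infDist x Γ), ENNReal.ofReal |g y - c| ∂σ := by
  have hp := S.dpos hx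
  have hC := S.C0pos
  rw [← S.ofReal_int, ← ENNReal.ofReal_mul (by positivity)]
  exact ENNReal.ofReal_le_ofReal (S.lemA c hx)

lemma sigma_ball (S : Setup d C₀ Γ σ g) {x : Euc n} (hx : x ∉ Γ) :
    σ (ball x (4 * infDist x Γ)) ≤ ENNReal.ofReal (C₀ * (5 * infDist x Γ) ^ d) := by
  have hp := S.dpos hx
  obtain ⟨z, hz, hzx⟩ := S.cl.exists_infDist_eq_dist S.ne x
  refine (measure_mono (ball_subset_ball' ?_)).trans (S.up z hz _ (by positivity))
  linarith

lemma grad_sq (S : Setup d C₀ Γ σ g) {x : Euc n} (hx : x ∉ Γ) :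
    ENNReal.ofReal (‖gradient (uu Γ σ g) x‖ ^ 2) ≤
      ENNReal.ofReal ((12 * C₀ ^ 3 * 2 ^ (d + 1) * 5 ^ d) ^ 2 * infDist x Γ ^ (-(2 * d + 2))) *
      ∫⁻ y in ball x (4 * infDist x Γ), ∫⁻ z in ball x (4 * infDist x Γ),
        ENNReal.ofReal (|g y - g z| ^ 2) ∂σ ∂σ := by
  have hp := S.dpos hx
  have hC := S.C0pos
  have hg := S.gm
  have := S.sf
  set δ := infDist x Γ with hδ
  set B := ball x (4 * δ) with hB
  have h1 : ENNReal.ofReal ‖gradient (uu Γ σ g) x‖ ≤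
      ENNReal.ofReal (4 * C₀ * (δ / 2) ^ (-(d + 1)) * (3 * C₀ * δ ^ (-d))) *
      ∫⁻ y in B, ∫⁻ z in B, ENNReal.ofReal |g y - g z| ∂σ ∂σ := by
    refine (ENNReal.ofReal_le_ofReal (S.grad_bound hx)).trans ?_
    rw [ENNReal.ofReal_mul (by positivity), S.ofReal_int, ENNReal.ofReal_mul (q := 3 * C₀ * δ ^ (-d)) (by positivity), mul_assoc (ENNReal.ofReal _)]
    refine mul_le_mul_right ?_ _
    rw [← lintegral_const_mul' _ _ ENNReal.ofReal_ne_top]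
    refine lintegral_mono fun y => ?_
    simp only
    rw [abs_sub_comm]
    refine (S.lemA' (g y) hx).trans ?_
    refine mul_le_mul_right ?_ _
    have hsub : ball x (3 * infDist x Γ) ⊆ B := ball_subset_ball (by linarith)
    refine (lintegral_mono_set hsub).trans ?_
    refine lintegral_mono fun z => ?_
    simp only
    rw [abs_sub_comm]
  have h2 : (∫⁻ y in B, ∫⁻ z in B, ENNReal.ofReal |g y - g z| ∂σ ∂σ) ^ 2 ≤
      σ B ^ 2 * ∫⁻ y in B, ∫⁻ z in B, ENNReal.ofReal (|g y - g z| ^ 2) ∂σ ∂σ := by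
    refine (sq_lintegral_le_meas _ _ ?_).trans ?_
    · apply Measurable.aemeasurable
      apply Measurable.lintegral_prod_right' (f := fun q : Euc n × Euc n => ENNReal.ofReal |g q.1 - g q.2|)
      fun_prop
    · rw [Measure.restrict_apply_univ, sq, mul_assoc]
      gcongr
      rw [← lintegral_const_mul' _ _ (S.ball_fin _ _).ne]
      refine lintegral_mono fun y => ?_
      refine (sq_lintegral_le_meas _ _ (by fun_prop)).trans ?_
      rw [Measure.restrict_apply_univ]
      simp_rw [← ENNReal.ofReal_pow (abs_nonneg _)]
      exact le_rfl
  rw [ENNReal.ofReal_pow (norm_nonneg _)]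
  calc _ ≤ (ENNReal.ofReal (4 * C₀ * (δ / 2) ^ (-(d + 1)) * (3 * C₀ * δ ^ (-d))) *
      ∫⁻ y in B, ∫⁻ z in B, ENNReal.ofReal |g y - g z| ∂σ ∂σ) ^ 2 := by gcongr
    _ ≤ ENNReal.ofReal (4 * C₀ * (δ / 2) ^ (-(d + 1)) * (3 * C₀ * δ ^ (-d))) ^ 2 *
      (ENNReal.ofReal (C₀ * (5 * δ) ^ d) ^ 2 *
        ∫⁻ y in B, ∫⁻ z in B, ENNReal.ofReal (|g y - g z| ^ 2) ∂σ ∂σ) := by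
      rw [mul_pow]
      gcongr
      refine h2.trans ?_
      gcongr
      exact S.sigma_ball hx
    _ = _ := by
      rw [← mul_assoc, ← ENNReal.ofReal_pow (by positivity), ← ENNReal.ofReal_pow (by positivity),
        ← ENNReal.ofReal_mul (by positivity)]
      congr 2
      have e1 : (δ / 2) ^ (-(d + 1)) = 2 ^ (d + 1) * (δ ^ d * δ)⁻¹ := by
        rw [Real.div_rpow hp.le (by norm_num), Real.rpow_neg hp.le, Real.rpow_neg (by norm_num),
          Real.rpow_add_one hp.ne']
        field_simp
      have e2 : δ ^ (-(2 * d + 2)) = ((δ ^ d * δ)⁻¹) ^ 2 := by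
        rw [← Real.rpow_add_one hp.ne', ← Real.rpow_neg hp.le, ← Real.rpow_natCast, ← Real.rpow_mul hp.le]
        congr 1; push_cast; ring
      have e3 : 0 < δ ^ d := by positivity
      rw [e1, e2, Real.rpow_neg hp.le, Real.mul_rpow (by norm_num) hp.le]
      field_simp
      ring

def Kf (s : ℝ) (x y z : Euc n) : ℝ≥0∞ :=
  (Ici (dist y z / 8)).indicator (fun t => ENNReal.ofReal (t ^ (-s))) (dist x y)

lemma Kf_meas (s : ℝ) : Measurable fun q : Euc n × (Euc n × Euc n) => Kf s q.1 q.2.1 q.2.2 := by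
  have : (fun q : Euc n × (Euc n × Euc n) => Kf s q.1 q.2.1 q.2.2) =
      {q : Euc n × (Euc n × Euc n) | dist q.2.1 q.2.2 / 8 ≤ dist q.1 q.2.1}.indicator
        (fun q => ENNReal.ofReal (dist q.1 q.2.1 ^ (-s))) := by
    funext q
    simp only [Kf, indicator, mem_Ici, mem_ofPred_eq]
  rw [this]
  refine Measurable.indicator (by fun_prop) (measurableSet_le (by fun_prop) (by fun_prop))

end Setup

lemma energy (n : ℕ) (d C₀ : ℝ) (hn : 2 ≤ n) (hd0 : 0 < d) :
    ∃ K : ℝ≥0∞, K ≠ ⊤ ∧ ∀ (Γ : Set (Euc n)) (σ : Measure (Euc n)) (g : Euc n → ℝ),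
      Setup d C₀ Γ σ g →
      ∫⁻ x in Γᶜ, ENNReal.ofReal (‖gradient (uu Γ σ g) x‖ ^ 2) ∂(measW n d Γ) ≤
        K * ∫⁻ x, EE d σ g x ∂σ := by
  obtain ⟨A, hA, hK⟩ := kernel_outer n hn d hd0
  set c1 : ℝ := (12 * C₀ ^ 3 * 2 ^ (d + 1) * 5 ^ d) ^ 2 with hc1
  have hc10 : 0 ≤ c1 := by positivity
  set s : ℝ := (n : ℝ) + 1 + d with hs
  have hs0 : 0 < s := by positivity
  refine ⟨ENNReal.ofReal (c1 * 4 ^ s) * (A * ENNReal.ofReal (8 ^ (d + 1))), by finiteness, ?_⟩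
  intro Γ σ g S
  have hC := S.C0pos
  have hg := S.gm
  have := S.sf
  have hw : Measurable fun x => ENNReal.ofReal (weightW n d Γ x) := by
    unfold weightW
    have : Measurable fun x : Euc n => infDist x Γ := measurable_infDist
    fun_prop
  rw [measW, setLIntegral_withDensity_eq_setLIntegral_mul _ hw
    (((measurable_grad _).norm.pow_const 2).ennreal_ofReal) S.cl.measurableSet.compl]
  set F : Euc n × Euc n → ℝ≥0∞ := fun q => ENNReal.ofReal (|g q.1 - g q.2| ^ 2) with hF
  have hFm : Measurable F := by fun_prop
  have hpt : ∀ x ∈ Γᶜ, ((fun x => ENNReal.ofReal (weightW n d Γ x)) *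
      (fun x => ENNReal.ofReal (‖gradient (uu Γ σ g) x‖ ^ 2))) x ≤
      ENNReal.ofReal (c1 * 4 ^ s) * ∫⁻ y, ∫⁻ z, Setup.Kf s x y z * F (y, z) ∂σ ∂σ := by
    intro x hx
    have hp := S.dpos hx
    have hgs := S.grad_sq hx
    simp only [Pi.mul_apply]
    refine (mul_le_mul_right hgs _).trans ?_
    rw [← mul_assoc, ← ENNReal.ofReal_mul (by unfold weightW; positivity)]
    have e1 : weightW n d Γ x * ((12 * C₀ ^ 3 * 2 ^ (d + 1) * 5 ^ d) ^ 2 *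
        infDist x Γ ^ (-(2 * d + 2))) = c1 * infDist x Γ ^ (-s) := by
      rw [weightW, mul_left_comm, ← Real.rpow_add hp, hc1]
      congr 2
      rw [hs]; ring
    rw [e1, ENNReal.ofReal_mul hc10, ENNReal.ofReal_mul hc10, mul_assoc, mul_assoc]
    refine mul_le_mul_right ?_ _
    rw [← lintegral_const_mul' _ _ ENNReal.ofReal_ne_top,
      ← lintegral_const_mul' _ _ ENNReal.ofReal_ne_top, ← lintegral_indicator measurableSet_ball]
    refine lintegral_mono_ae ?_
    filter_upwards [S.ae] with y hy
    by_cases hyB : y ∈ ball x (4 * infDist x Γ)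
    swap
    · rw [indicator_of_notMem hyB]; exact zero_le
    rw [indicator_of_mem hyB, ← lintegral_const_mul' _ _ ENNReal.ofReal_ne_top,
      ← lintegral_const_mul' _ _ ENNReal.ofReal_ne_top, ← lintegral_indicator measurableSet_ball]
    refine lintegral_mono fun z => ?_
    by_cases hzB : z ∈ ball x (4 * infDist x Γ)
    swap
    · rw [indicator_of_notMem hzB]; exact zero_le
    rw [indicator_of_mem hzB, ← mul_assoc]
    have h1 : infDist x Γ ≤ dist x y := infDist_le_dist_of_mem hy
    rw [mem_ball] at hyB hzB
    have h2 : dist y z / 8 ≤ dist x y := by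
      linarith [dist_triangle_right y z x]
    simp only [hF]
    gcongr
    rw [Setup.Kf, indicator_of_mem (by exact h2), ← ENNReal.ofReal_mul (by positivity)]
    apply ENNReal.ofReal_le_ofReal
    have e2 : (4:ℝ) ^ s = ((4:ℝ)⁻¹) ^ (-s) := by
      rw [Real.inv_rpow (by norm_num), ← Real.rpow_neg (by norm_num), neg_neg]
    rw [e2, ← Real.mul_rpow (by norm_num) (by positivity)]
    apply Real.rpow_le_rpow_of_nonpos (by linarith) _ (by linarith)
    rw [dist_comm] at hyB
    linarith
  refine (setLIntegral_mono' S.cl.measurableSet.compl hpt).trans ?_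
  refine (setLIntegral_le_lintegral _ _).trans ?_
  rw [lintegral_const_mul' _ _ ENNReal.ofReal_ne_top, mul_assoc (ENNReal.ofReal _)]
  gcongr
  have hKm := Setup.Kf_meas (n := n) s
  have hjoint : Measurable fun q : Euc n × (Euc n × Euc n) => Setup.Kf s q.1 q.2.1 q.2.2 * F q.2 :=
    hKm.mul (hFm.comp measurable_snd)
  calc ∫⁻ x, ∫⁻ y, ∫⁻ z, Setup.Kf s x y z * F (y, z) ∂σ ∂σ
      = ∫⁻ x, ∫⁻ q, Setup.Kf s x q.1 q.2 * F q ∂(σ.prod σ) := by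
        refine lintegral_congr fun x => ?_
        rw [lintegral_prod]
        exact (hjoint.comp (measurable_const.prodMk measurable_id : Measurable fun q : Euc n × Euc n => (x, q))).aemeasurable
    _ = ∫⁻ q, ∫⁻ x, Setup.Kf s x q.1 q.2 * F q ∂volume ∂(σ.prod σ) := by
        exact lintegral_lintegral_swap hjoint.aemeasurable
    _ ≤ ∫⁻ q, (A * ENNReal.ofReal (8 ^ (d + 1))) * (ENNReal.ofReal (|g q.1 - g q.2| ^ 2) / ENNReal.ofReal (dist q.1 q.2 ^ (d + 1))) ∂(σ.prod σ) := by
        refine lintegral_mono fun q => ?_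
        have hFt : F q ≠ ⊤ := ENNReal.ofReal_ne_top
        rw [lintegral_mul_const' _ _ hFt]
        by_cases hq : q.1 = q.2
        · simp [hF, hq]
        have hpos : 0 < dist q.1 q.2 := dist_pos.2 hq
        refine (mul_le_mul_left (hK q.1 (dist q.1 q.2 / 8) (by positivity)) _).trans (le_of_eq ?_)
        rw [ENNReal.div_eq_inv_mul, ← ENNReal.ofReal_inv_of_pos (by positivity),
          ← Real.rpow_neg hpos.le, Real.div_rpow hpos.le (by norm_num),
          Real.rpow_neg (x := 8) (by norm_num), div_inv_eq_mul, mul_comm (dist q.1 q.2 ^ _),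
          ENNReal.ofReal_mul (by positivity)]
        simp only [hF]
        ring
    _ = _ := by
        rw [lintegral_const_mul' _ _ (by finiteness), lintegral_prod]
        · rfl
        · apply Measurable.aemeasurable
          fun_prop

lemma trace_est (n : ℕ) (d C₀ : ℝ) (hn : 2 ≤ n) (hd0 : 0 < d) (hdn : d < n) :
    ∃ K : ℝ≥0∞, K ≠ ⊤ ∧ ∀ (Γ : Set (Euc n)) (σ : Measure (Euc n)) (g : Euc n → ℝ),
      Setup d C₀ Γ σ g → volume Γ = 0 → ∀ x ∈ Γ, ∀ ρ : ℝ, 0 < ρ →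
      (∫⁻ y in ball x ρ, ENNReal.ofReal |uu Γ σ g y - g x|) ^ 2 ≤
        K * EE d σ g x * ENNReal.ofReal (ρ ^ (2 * n + 1)) := by
  obtain ⟨A, hA, hK⟩ := kernel_inner n hn d hdn
  refine ⟨(ENNReal.ofReal (3 * C₀ * 3 ^ d) * (A * ENNReal.ofReal (3 ^ ((n : ℝ) - d)))) ^ 2 *
    ENNReal.ofReal (C₀ * 4 ^ d * 4 ^ (d + 1)), by finiteness, ?_⟩
  intro Γ σ g S hnull x hx ρ hρ
  have hC := S.C0pos
  have hg := S.gm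
  have := S.sf
  set G : Euc n → ℝ≥0∞ := fun z => ENNReal.ofReal |g z - g x| with hG
  have hGm : Measurable G := by fun_prop
  set k : ℝ → ℝ≥0∞ := (Iio (3 * ρ)).indicator (fun t => ENNReal.ofReal (t ^ (-d))) with hk
  have hkm : Measurable k := Measurable.indicator (by fun_prop) measurableSet_Iio
  have hae : ∀ᵐ y : Euc n, y ∉ Γ := by
    rw [ae_iff]; simpa using hnull
  have h1 : ∫⁻ y in ball x ρ, ENNReal.ofReal |uu Γ σ g y - g x| ≤
      ∫⁻ y, ENNReal.ofReal (3 * C₀ * 3 ^ d) * ∫⁻ z in ball x (4 * ρ), k (dist y z) * G z ∂σ := by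
    rw [← lintegral_indicator measurableSet_ball]
    refine lintegral_mono_ae ?_
    filter_upwards [hae] with y hy
    by_cases hyB : y ∈ ball x ρ
    swap
    · rw [indicator_of_notMem hyB]; exact zero_le
    rw [indicator_of_mem hyB]
    have hp := S.dpos hy
    have hyx : infDist y Γ ≤ dist y x := infDist_le_dist_of_mem hx
    rw [mem_ball] at hyB
    refine (S.lemA' (g x) hy).trans ?_
    rw [ENNReal.ofReal_mul (by positivity), ENNReal.ofReal_mul (by positivity : 0 ≤ 3 * C₀), mul_assoc,
      mul_assoc]
    refine mul_le_mul_right ?_ _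
    rw [← lintegral_const_mul' _ _ ENNReal.ofReal_ne_top,
      ← lintegral_const_mul' _ _ ENNReal.ofReal_ne_top, ← lintegral_indicator measurableSet_ball,
      ← lintegral_indicator measurableSet_ball]
    refine lintegral_mono_ae ?_
    filter_upwards [S.ae] with z hz
    by_cases hzB : z ∈ ball y (3 * infDist y Γ)
    swap
    · rw [indicator_of_notMem hzB]; exact zero_le
    have hyz : infDist y Γ ≤ dist y z := infDist_le_dist_of_mem hz
    rw [indicator_of_mem hzB]
    rw [mem_ball, dist_comm] at hzB
    rw [indicator_of_mem (by
      rw [mem_ball]; linarith [dist_triangle_left z x y])]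
    rw [← mul_assoc]
    simp only [hG]
    gcongr
    rw [hk, indicator_of_mem (by simp only [mem_Iio]; linarith), ← ENNReal.ofReal_mul (by positivity)]
    apply ENNReal.ofReal_le_ofReal
    have e2 : (3:ℝ) ^ d = ((3:ℝ)⁻¹) ^ (-d) := by
      rw [Real.inv_rpow (by norm_num), ← Real.rpow_neg (by norm_num), neg_neg]
    rw [e2, ← Real.mul_rpow (by norm_num) (by positivity)]
    apply Real.rpow_le_rpow_of_nonpos (by linarith) _ (by linarith)
    linarith
  have h2 : ∫⁻ y, ENNReal.ofReal (3 * C₀ * 3 ^ d) * ∫⁻ z in ball x (4 * ρ), k (dist y z) * G z ∂σ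
      ≤ ENNReal.ofReal (3 * C₀ * 3 ^ d) * (A * ENNReal.ofReal ((3 * ρ) ^ ((n : ℝ) - d)) *
        ∫⁻ z in ball x (4 * ρ), G z ∂σ) := by
    rw [lintegral_const_mul' _ _ ENNReal.ofReal_ne_top]
    gcongr
    rw [lintegral_lintegral_swap, ← lintegral_const_mul' _ _ (by finiteness)]
    · refine lintegral_mono fun z => ?_
      rw [lintegral_mul_const' _ _ ENNReal.ofReal_ne_top]
      gcongr
      exact hK z (3 * ρ) (by positivity)
    · apply Measurable.aemeasurable
      exact (hkm.comp (by fun_prop)).mul (hGm.comp measurable_snd)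
  have h3 := S.loc_bound x (4 * ρ) (by positivity)
  have h4 := S.up x hx (4 * ρ) (by positivity)
  calc _ ≤ (ENNReal.ofReal (3 * C₀ * 3 ^ d) * (A * ENNReal.ofReal ((3 * ρ) ^ ((n : ℝ) - d)) *
        ∫⁻ z in ball x (4 * ρ), G z ∂σ)) ^ 2 := by
        gcongr; exact h1.trans h2
    _ = (ENNReal.ofReal (3 * C₀ * 3 ^ d) * (A * ENNReal.ofReal ((3 * ρ) ^ ((n : ℝ) - d)))) ^ 2 *
        (∫⁻ z in ball x (4 * ρ), G z ∂σ) ^ 2 := by ring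
    _ ≤ (ENNReal.ofReal (3 * C₀ * 3 ^ d) * (A * ENNReal.ofReal ((3 * ρ) ^ ((n : ℝ) - d)))) ^ 2 *
        (ENNReal.ofReal (C₀ * (4 * ρ) ^ d) * (ENNReal.ofReal ((4 * ρ) ^ (d + 1)) * EE d σ g x)) := by
        gcongr
        exact h3.trans (by gcongr)
    _ = _ := by
      rw [Real.mul_rpow (by norm_num) hρ.le, Real.mul_rpow (by norm_num) hρ.le,
        Real.mul_rpow (by norm_num) hρ.le, ENNReal.ofReal_mul (q := ρ ^ ((n : ℝ) - d)) (by positivity), ← mul_assoc C₀,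
        ENNReal.ofReal_mul (q := ρ ^ d) (by positivity),
        ENNReal.ofReal_mul (q := ρ ^ (d + 1)) (by positivity),
        ENNReal.ofReal_mul (q := 4 ^ (d + 1)) (by positivity)]
      have : ENNReal.ofReal (ρ ^ (2 * n + 1)) = ENNReal.ofReal (ρ ^ ((n : ℝ) - d)) ^ 2 *
          ENNReal.ofReal (ρ ^ d) * ENNReal.ofReal (ρ ^ (d + 1)) := by
        rw [← ENNReal.ofReal_pow (by positivity), ← ENNReal.ofReal_mul (by positivity),
          ← ENNReal.ofReal_mul (by positivity)]
        congr 1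
        rw [← Real.rpow_natCast, ← Real.rpow_natCast, ← Real.rpow_mul hρ.le, ← Real.rpow_add hρ,
          ← Real.rpow_add hρ]
        congr 1
        push_cast; ring
      rw [this]
      ring

lemma uu_aesm {n : ℕ} {d C₀ : ℝ} {Γ : Set (Euc n)} {σ : Measure (Euc n)} {g : Euc n → ℝ}
    (S : Setup d C₀ Γ σ g) (hnull : volume Γ = 0) :
    AEStronglyMeasurable (uu Γ σ g) (volume : Measure (Euc n)) := by
  have hc : ContinuousOn (uu Γ σ g) Γᶜ := by
    intro x hx
    obtain ⟨K, t, ht, hK⟩ := S.loc_lip hx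
    exact (hK.continuousOn.continuousAt ht).continuousWithinAt
  have h := hc.aestronglyMeasurable (μ := volume) S.cl.measurableSet.compl
  rwa [Measure.restrict_eq_self_of_ae_mem] at h
  rw [ae_iff]; simpa using hnull

lemma uu_intOn {n : ℕ} {d C₀ : ℝ} {Γ : Set (Euc n)} {σ : Measure (Euc n)} {g : Euc n → ℝ}
    (S : Setup d C₀ Γ σ g) (hnull : volume Γ = 0) {x : Euc n} (hx : x ∈ Γ)
    (hE : EE d σ g x < ⊤) {ρ : ℝ} (hρ : 0 < ρ) : IntegrableOn (uu Γ σ g) (ball x ρ) volume := by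
  obtain ⟨K, hK, h⟩ := trace_est n d C₀ S.hn S.hd0 (by linarith [S.hdn])
  have h1 := h Γ σ g S hnull x hx ρ hρ
  have h2 : IntegrableOn (fun y => uu Γ σ g y - g x) (ball x ρ) volume := by
    refine ⟨((uu_aesm S hnull).sub aestronglyMeasurable_const).restrict, ?_⟩
    rw [hasFiniteIntegral_iff_norm]
    have : (∫⁻ y in ball x ρ, ENNReal.ofReal |uu Γ σ g y - g x|) ^ 2 < ⊤ :=
      h1.trans_lt (by finiteness)
    simpa using this
  have h3 := h2.add (integrableOn_const (C := g x) measure_ball_lt_top.ne)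
  refine h3.congr (Eventually.of_forall fun y => ?_)
  simp

lemma uu_locInt {n : ℕ} {d C₀ : ℝ} {Γ : Set (Euc n)} {σ : Measure (Euc n)} {g : Euc n → ℝ}
    (S : Setup d C₀ Γ σ g) (hnull : volume Γ = 0) : LocallyIntegrable (uu Γ σ g) volume := by
  obtain ⟨p, hp, hE⟩ := S.exists_good
  intro x
  refine ⟨ball p (dist x p + 1), isOpen_ball.mem_nhds (by rw [mem_ball]; linarith),
    uu_intOn S hnull hp hE (by positivity)⟩

lemma uu_trace {n : ℕ} {d C₀ : ℝ} {Γ : Set (Euc n)} {σ : Measure (Euc n)} {g : Euc n → ℝ}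
    (S : Setup d C₀ Γ σ g) (hnull : volume Γ = 0) {x : Euc n} (hx : x ∈ Γ)
    (hE : EE d σ g x < ⊤) : HasTraceAt (uu Γ σ g) x (g x) := by
  obtain ⟨K, hK, h⟩ := trace_est n d C₀ S.hn S.hd0 (by linarith [S.hdn])
  have h1 := h Γ σ g S hnull x hx
  have hKE : K * EE d σ g x ≠ ⊤ := by finiteness
  set c : ℝ := (K * EE d σ g x).toReal with hc
  have hc0 : 0 ≤ c := ENNReal.toReal_nonneg
  set b : ℝ := volume.real (ball (0 : Euc n) 1) with hb
  have hb0 : 0 < b := ENNReal.toReal_pos (measure_ball_pos _ _ one_pos).ne' measure_ball_lt_top.ne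
  have key : ∀ ρ : ℝ, 0 < ρ → |(⨍ y in ball x ρ, uu Γ σ g y) - g x| ≤ √(c / b ^ 2 * ρ) := by
    intro ρ hρ
    have hi := uu_intOn S hnull hx hE hρ
    have hi' : IntegrableOn (fun y => |uu Γ σ g y - g x|) (ball x ρ) volume :=
      (hi.sub (integrableOn_const (C := g x) measure_ball_lt_top.ne)).abs
    set I := ∫ y in ball x ρ, |uu Γ σ g y - g x| with hI
    have hI0 : 0 ≤ I := integral_nonneg fun _ => abs_nonneg _
    have hI2 : I ^ 2 ≤ c * ρ ^ (2 * n + 1) := by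
      have h2 := h1 ρ hρ
      rw [← ofReal_integral_eq_lintegral_ofReal hi' (Eventually.of_forall fun _ => abs_nonneg _),
        ← ENNReal.ofReal_pow hI0, ← ENNReal.ofReal_toReal hKE, ← ENNReal.ofReal_mul hc0] at h2
      exact (ENNReal.ofReal_le_ofReal_iff (by positivity)).1 h2
    have hvol : volume.real (ball x ρ) = ρ ^ n * b := by
      rw [Measure.real, Measure.addHaar_ball_of_pos _ _ hρ, ENNReal.toReal_mul,
        ENNReal.toReal_ofReal (by positivity)]
      simp [hb, Measure.real]
    have hav : (⨍ y in ball x ρ, uu Γ σ g y) - g x = (ρ ^ n * b)⁻¹ * ∫ y in ball x ρ, (uu Γ σ g y - g x) := by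
      rw [setAverage_eq, hvol, integral_sub hi (integrableOn_const measure_ball_lt_top.ne),
        setIntegral_const, hvol, smul_eq_mul, smul_eq_mul]
      field_simp
    have habs : |(⨍ y in ball x ρ, uu Γ σ g y) - g x| ≤ (ρ ^ n * b)⁻¹ * I := by
      rw [hav, abs_mul, abs_of_pos (by positivity)]
      gcongr
      exact abs_integral_le_integral_abs
    refine habs.trans (Real.le_sqrt_of_sq_le ?_)
    calc ((ρ ^ n * b)⁻¹ * I) ^ 2 = ((ρ ^ n * b)⁻¹) ^ 2 * I ^ 2 := by ring
      _ ≤ ((ρ ^ n * b)⁻¹) ^ 2 * (c * ρ ^ (2 * n + 1)) := by gcongr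
      _ = c / b ^ 2 * ρ := by
        have h5 : ρ ^ (2 * n + 1) = (ρ ^ n) ^ 2 * ρ := by ring
        rw [h5]
        field_simp
  unfold HasTraceAt
  rw [tendsto_iff_dist_tendsto_zero]
  have hlim : Tendsto (fun ρ : ℝ => √(c / b ^ 2 * ρ)) (𝓝[>] 0) (𝓝 0) := by
    have : Continuous (fun ρ : ℝ => √(c / b ^ 2 * ρ)) := by fun_prop
    have h0 := this.tendsto 0
    simp only [mul_zero, Real.sqrt_zero] at h0
    exact h0.mono_left nhdsWithin_le_nhds
  refine squeeze_zero' (Eventually.of_forall fun _ => dist_nonneg) ?_ hlim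
  filter_upwards [self_mem_nhdsWithin] with ρ hρ
  rw [Real.dist_eq]
  exact key ρ hρ

/-- the extension theorem `E : H → W`. -/
theorem statement10 (n : ℕ) (hn : 2 ≤ n) (d C₀ : ℝ) (hd0 : 0 < d)
    (hdn : d < (n : ℝ) - 1) (hC₀ : 1 ≤ C₀) :
    ∃ C : ℝ, 0 < C ∧
      ∀ Γ : Set (Euc n), Γ.Nonempty → IsClosed Γ → AhlforsRegular n d C₀ Γ →
        ∀ g : Euc n → ℝ, AEMeasurable g (μH[d].restrict Γ) →
          (∫⁻ x in Γ, ∫⁻ y in Γ,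
              ENNReal.ofReal (|g x - g y| ^ 2) / ENNReal.ofReal (dist x y ^ (d + 1))
                ∂(μH[d]) ∂(μH[d])) < ⊤ →
          ∃ u v, MemW n d Γ u v ∧ LocallyIntegrable u volume ∧
            (∫⁻ x in Γᶜ, ENNReal.ofReal (‖v x‖ ^ 2) ∂(measW n d Γ)) ^ ((1 : ℝ) / 2)
              ≤ ENNReal.ofReal C *
                (∫⁻ x in Γ, ∫⁻ y in Γ,
                  ENNReal.ofReal (|g x - g y| ^ 2) / ENNReal.ofReal (dist x y ^ (d + 1))
                    ∂(μH[d]) ∂(μH[d])) ^ ((1 : ℝ) / 2) ∧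
            ∀ᵐ x ∂(μH[d].restrict Γ), HasTraceAt u x (g x) := by
  obtain ⟨K, hK, hen⟩ := energy n d C₀ hn hd0
  refine ⟨(K ^ ((1 : ℝ) / 2)).toReal + 1, by positivity, ?_⟩
  intro Γ hne hcl hAR g hg hE
  have hnull : volume Γ = 0 := volume_null_of_ahlfors (by linarith) hne hAR
  set σ : Measure (Euc n) := μH[d].restrict Γ with hσ
  have hσb : ∀ x r, σ (ball x r) = μH[d] (Γ ∩ ball x r) := by
    intro x r
    rw [hσ, Measure.restrict_apply measurableSet_ball, inter_comm]
  have hlf : IsLocallyFiniteMeasure σ := by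
    obtain ⟨p, hp⟩ := hne
    refine ⟨fun x => ⟨ball p (dist x p + 1), isOpen_ball.mem_nhds (by rw [mem_ball]; linarith), ?_⟩⟩
    rw [hσb]
    exact (hAR p hp _ (by positivity)).2.trans_lt ENNReal.ofReal_lt_top
  set g' := hg.mk g with hg'
  have hgg : g =ᵐ[σ] g' := hg.ae_eq_mk
  have hEE : ∫⁻ x, EE d σ g' x ∂σ = ∫⁻ x, ∫⁻ y,
      ENNReal.ofReal (|g x - g y| ^ 2) / ENNReal.ofReal (dist x y ^ (d + 1)) ∂σ ∂σ := by
    unfold EE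
    refine lintegral_congr_ae ?_
    filter_upwards [hgg] with x hx
    refine lintegral_congr_ae ?_
    filter_upwards [hgg] with y hy
    rw [hx, hy]
  have S : Setup d C₀ Γ σ g' :=
    { hn := hn, hd0 := hd0, hdn := hdn, hC := hC₀, ne := hne, cl := hcl
      lo := fun x hx r hr => by rw [hσb]; exact (hAR x hx r hr).1
      up := fun x hx r hr => by rw [hσb]; exact (hAR x hx r hr).2
      ae := ae_restrict_mem hcl.measurableSet
      gm := hg.measurable_mk
      en := by
        change ∫⁻ x, EE d σ g' x ∂σ < ⊤
        rw [hEE]; exact hE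
      sf := inferInstance }
  have hmain := hen Γ σ g' S
  rw [hEE] at hmain
  have hKr : K ^ ((1 : ℝ) / 2) ≠ ⊤ := ENNReal.rpow_ne_top_of_nonneg (by norm_num) hK
  refine ⟨uu Γ σ g', gradient (uu Γ σ g'), ⟨?_, ?_, ?_, ?_⟩, uu_locInt S hnull, ?_, ?_⟩
  · exact (uu_locInt S hnull).locallyIntegrableOn _
  · exact grad_locInt fun x hx => S.loc_lip hx
  · exact ibp hcl.isOpen_compl fun x hx => S.loc_lip hx
  · exact hmain.trans_lt (ENNReal.mul_lt_top hK.lt_top hE)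
  · refine (ENNReal.rpow_le_rpow hmain (by norm_num)).trans ?_
    rw [ENNReal.mul_rpow_of_nonneg _ _ (by norm_num)]
    gcongr
    calc K ^ ((1 : ℝ) / 2) = ENNReal.ofReal (K ^ ((1 : ℝ) / 2)).toReal :=
          (ENNReal.ofReal_toReal hKr).symm
      _ ≤ _ := ENNReal.ofReal_le_ofReal (by linarith)
  · filter_upwards [S.ae, S.EE_ae, hgg] with x hx hEx hgx
    rw [hgx]
    exact uu_trace S hnull hx hEx
end
end
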